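/- Consider the stochastic regression model X_{n+1} = θ^t Φ_n + ε_{n+1} with least squares estimator θ̂_n. Assume (ε_n) is a martingale difference sequence with E[ε_{n+1}² | F_n] = σ² a.s. and sup_{n≥0} E[|ε_{n+1}|^a | F_n] < ∞ a.s. for some a > 2, the explosion coefficient f_n → 0 a.s., and there exists a positive random sequence (α_n) increasing to infinity and a symmetric positive definite d×d matrix L with S_n/α_n → L a.s. Let Γ_n = (1/n) Σ_{k=0}^{n-1} (X_{k+1} − θ̂_k^t Φ_k)² and Δ_n = (1/n) Σ_{k=1}^n ε_k². Then lim_{n→∞} (n/log d_n)(Γ_n − Δ_n) = σ² almost surely. -/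

import Mathlib

open MeasureTheory ProbabilityTheory Filter Finset Matrix Topology

noncomputable section

/-- `S_n = S + ∑_{k=0}^n Φ_k Φ_kᵗ`. -/
def Smat {Ω : Type*} {d : ℕ} (S : Matrix (Fin d) (Fin d) ℝ)
    (Φ : ℕ → Ω → Fin d → ℝ) (n : ℕ) (ω : Ω) : Matrix (Fin d) (Fin d) ℝ :=
  S + ∑ k ∈ Finset.range (n + 1), vecMulVec (Φ k ω) (Φ k ω)

/-- The explosion coefficient `f_n = Φ_nᵗ S_n⁻¹ Φ_n`. -/
def expl {Ω : Type*} {d : ℕ} (S : Matrix (Fin d) (Fin d) ℝ)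
    (Φ : ℕ → Ω → Fin d → ℝ) (n : ℕ) (ω : Ω) : ℝ :=
  Φ n ω ⬝ᵥ ((Smat S Φ n ω)⁻¹ *ᵥ Φ n ω)

/-- The least squares estimator `θ̂_n = S_{n-1}⁻¹ ∑_{k=1}^n Φ_{k-1} X_k`. -/
def lsq {Ω : Type*} {d : ℕ} (S : Matrix (Fin d) (Fin d) ℝ)
    (Φ : ℕ → Ω → Fin d → ℝ) (X : ℕ → Ω → ℝ) (n : ℕ) (ω : Ω) : Fin d → ℝ :=
  (Smat S Φ (n - 1) ω)⁻¹ *ᵥ ∑ k ∈ Finset.Icc 1 n, X k ω • Φ (k - 1) ω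


lemma rv_phi_ineq (x y p : ℝ) (hp1 : 1 ≤ p) (hp2 : p ≤ 2) :
    Real.sqrt (1 + (x + y) ^ 2) ≤
      Real.sqrt (1 + x ^ 2) + x / Real.sqrt (1 + x ^ 2) * y + 2 * |y| ^ p := by
  set A := Real.sqrt (1 + x ^ 2) with hA
  have hA2 : A ^ 2 = 1 + x ^ 2 := Real.sq_sqrt (by positivity)
  have hA1 : 1 ≤ A := by
    rw [hA]; apply Real.one_le_sqrt.2; nlinarith [sq_nonneg x]
  have hA0 : 0 < A := by linarith
  have hxA : |x / A| ≤ 1 := by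
    rw [abs_div, abs_of_pos hA0, div_le_one hA0]
    exact Real.abs_le_sqrt (by linarith)
  set q := x / A with hq
  have hqA : q * A = x := by rw [hq]; field_simp
  have hqy : |q * y| ≤ |y| := by
    rw [abs_mul]; exact mul_le_of_le_one_left (abs_nonneg y) hxA
  have hqy' := abs_le.1 hqy
  have hpow : 0 ≤ |y| ^ p := by positivity
  rcases le_or_gt |y| 1 with hy | hy
  · have h1 : y ^ 2 ≤ |y| ^ p := by
      rw [← sq_abs, ← Real.rpow_two]
      rcases eq_or_lt_of_le (abs_nonneg y) with h0 | h0
      · rw [← h0, Real.zero_rpow (by norm_num)]; positivity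
      · exact Real.rpow_le_rpow_of_exponent_ge h0 hy hp2
    have h2 : Real.sqrt (1 + (x + y) ^ 2) ≤ A + q * y + y ^ 2 := by
      apply Real.sqrt_le_iff.2
      have hs := sq_abs y
      constructor
      · nlinarith [abs_nonneg y, sq_nonneg (|y| - 1)]
      · have : (A + q * y + y ^ 2) ^ 2 = A ^ 2 + 2 * (q * A) * y + 2 * A * y ^ 2
            + (q * y + y ^ 2) ^ 2 := by ring
        rw [this, hqA, hA2]
        nlinarith [sq_nonneg y, sq_nonneg (q * y + y ^ 2)]
    linarith
  · have h1 : |y| ≤ |y| ^ p := by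
      conv_lhs => rw [← Real.rpow_one |y|]
      exact Real.rpow_le_rpow_of_exponent_le hy.le hp1
    have h2 : Real.sqrt (1 + (x + y) ^ 2) ≤ A + |y| := by
      apply Real.sqrt_le_iff.2
      refine ⟨by positivity, ?_⟩
      have h3 : x * y ≤ A * |y| := by
        rw [← hqA]
        nlinarith
      nlinarith [sq_abs y]
    linarith

lemma rv_mart_bdd {Ω : Type*} {m0 : MeasurableSpace Ω} {μ : Measure Ω} [IsProbabilityMeasure μ]
    (F : Filtration ℕ m0) (D : ℕ → Ω → ℝ) (p : ℝ) (hp1 : 1 ≤ p) (hp2 : p ≤ 2)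
    (hDm : ∀ n, StronglyMeasurable[F (n + 1)] (D n))
    (hDi : ∀ n, Integrable (D n) μ)
    (hD0 : ∀ n, μ[D n|F n] =ᵐ[μ] 0)
    (hDp : ∀ n, Integrable (fun ω => |D n ω| ^ p) μ)
    (K : ℝ) (hK : ∀ n, ∑ k ∈ Finset.range n, ∫ ω, |D k ω| ^ p ∂μ ≤ K) :
    ∀ᵐ ω ∂μ, ∃ l, Tendsto (fun n => ∑ k ∈ Finset.range n, D k ω) atTop (𝓝 l) := by
  set N : ℕ → Ω → ℝ := fun n ω => ∑ k ∈ Finset.range n, D k ω with hN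
  have hNm : ∀ n, StronglyMeasurable[F n] (N n) := by
    intro n
    apply Finset.stronglyMeasurable_fun_sum
    intro k hk
    exact (hDm k).mono (F.mono (Finset.mem_range.1 hk))
  have hNi : ∀ n, Integrable (N n) μ := fun n => integrable_finsetSum _ fun k _ => hDi k
  have hmart : Martingale N F μ := by
    apply martingale_of_condExp_sub_eq_zero_nat hNm hNi
    intro i
    have : N (i + 1) - N i = D i := by
      ext ω; simp [hN, Finset.sum_range_succ]
    rw [this]; exact hD0 i
  have hphi_le : ∀ x : ℝ, Real.sqrt (1 + x ^ 2) ≤ 1 + |x| := fun x => by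
    apply Real.sqrt_le_iff.2
    exact ⟨by positivity, by nlinarith [sq_abs x, abs_nonneg x]⟩
  have hcont : Continuous fun x : ℝ => Real.sqrt (1 + x ^ 2) := by fun_prop
  have hphii : ∀ n, Integrable (fun ω => Real.sqrt (1 + N n ω ^ 2)) μ := by
    intro n
    refine Integrable.mono' ((integrable_const (1 : ℝ)).add (hNi n).abs) ?_ ?_
    · exact hcont.comp_aestronglyMeasurable (hNi n).aestronglyMeasurable
    · filter_upwards with ω
      rw [Real.norm_of_nonneg (Real.sqrt_nonneg _)]
      exact hphi_le _
  have hcontq : Continuous fun x : ℝ => x / Real.sqrt (1 + x ^ 2) := by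
    apply Continuous.div (by fun_prop) hcont
    intro x
    positivity
  have hq1 : ∀ x : ℝ, ‖x / Real.sqrt (1 + x ^ 2)‖ ≤ 1 := fun x => by
    have h0 : 0 < Real.sqrt (1 + x ^ 2) := by positivity
    rw [Real.norm_eq_abs, abs_div, abs_of_pos h0, div_le_one h0]
    apply Real.abs_le_sqrt
    linarith
  have hcross : ∀ n, ∫ ω, N n ω / Real.sqrt (1 + N n ω ^ 2) * D n ω ∂μ = 0 := by
    intro n
    have h1 := condExp_stronglyMeasurable_mul_of_bound (μ := μ) (F.le n)
      (f := fun ω => N n ω / Real.sqrt (1 + N n ω ^ 2)) (g := D n)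
      (hcontq.comp_stronglyMeasurable (hNm n)) (hDi n) 1
      (Eventually.of_forall fun ω => hq1 _)
    have h2 : ∫ ω, N n ω / Real.sqrt (1 + N n ω ^ 2) * D n ω ∂μ
        = ∫ ω, ((fun ω => N n ω / Real.sqrt (1 + N n ω ^ 2)) * D n) ω ∂μ := rfl
    rw [h2, ← integral_condExp (F.le n), integral_congr_ae (g := fun _ => (0 : ℝ))]
    · simp
    · filter_upwards [h1, hD0 n] with ω h h'
      rw [h]; simp [h']
  have hcrossi : ∀ n, Integrable (fun ω => N n ω / Real.sqrt (1 + N n ω ^ 2) * D n ω) μ := by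
    intro n
    exact (hDi n).bdd_mul (hcontq.comp_aestronglyMeasurable (hNi n).aestronglyMeasurable)
      (Eventually.of_forall fun ω => hq1 _)
  have hstep : ∀ n, ∫ ω, Real.sqrt (1 + N n ω ^ 2) ∂μ ≤
      1 + 2 * ∑ k ∈ Finset.range n, ∫ ω, |D k ω| ^ p ∂μ := by
    intro n
    induction n with
    | zero => simp [hN]
    | succ n ih =>
      have h1 : ∫ ω, Real.sqrt (1 + N (n + 1) ω ^ 2) ∂μ ≤
          ∫ ω, ((Real.sqrt (1 + N n ω ^ 2) + N n ω / Real.sqrt (1 + N n ω ^ 2) * D n ω)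
            + 2 * |D n ω| ^ p) ∂μ := by
        apply integral_mono (hphii (n + 1))
          (((hphii n).add (hcrossi n)).add ((hDp n).const_mul 2))
        intro ω
        have : N (n + 1) ω = N n ω + D n ω := by simp [hN, Finset.sum_range_succ]
        simp only [this]
        exact rv_phi_ineq _ _ p hp1 hp2
      have hadd : Integrable (fun ω => Real.sqrt (1 + N n ω ^ 2)
          + N n ω / Real.sqrt (1 + N n ω ^ 2) * D n ω) μ := (hphii n).add (hcrossi n)
      rw [integral_add hadd ((hDp n).const_mul 2),
        integral_add (hphii n) (hcrossi n), hcross, integral_const_mul] at h1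
      rw [Finset.sum_range_succ]
      linarith
  refine hmart.submartingale.exists_ae_tendsto_of_bdd (R := (1 + 2 * K).toNNReal) ?_
  intro n
  rw [eLpNorm_one_eq_lintegral_enorm, ← ofReal_integral_norm_eq_lintegral_enorm (hNi n)]
  apply ENNReal.ofReal_le_ofReal
  calc ∫ ω, ‖N n ω‖ ∂μ ≤ ∫ ω, Real.sqrt (1 + N n ω ^ 2) ∂μ := by
        apply integral_mono (hNi n).norm (hphii n)
        intro ω
        apply Real.abs_le_sqrt
        linarith
    _ ≤ _ := by linarith [hstep n, hK n]


lemma rv_mart_loc {Ω : Type*} {m0 : MeasurableSpace Ω} {μ : Measure Ω} [IsProbabilityMeasure μ]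
    (F : Filtration ℕ m0) (η w : ℕ → Ω → ℝ) (p : ℝ) (hp1 : 1 ≤ p) (hp2 : p ≤ 2)
    (hηm : ∀ n, StronglyMeasurable[F (n + 1)] (η n))
    (hηi : ∀ n, Integrable (η n) μ)
    (hη0 : ∀ n, μ[η n|F n] =ᵐ[μ] 0)
    (hηp : ∀ n, Integrable (fun ω => |η n ω| ^ p) μ)
    (hηC : ∀ᵐ ω ∂μ, ∃ C : ℝ, ∀ n, (μ[fun ω => |η n ω| ^ p|F n]) ω ≤ C)
    (hwm : ∀ n, StronglyMeasurable[F n] (w n))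
    (hws : ∀ᵐ ω ∂μ, Summable fun n => |w n ω| ^ p) :
    ∀ᵐ ω ∂μ, ∃ l, Tendsto (fun n => ∑ k ∈ Finset.range n, w k ω * η k ω) atTop (𝓝 l) := by
  have hp0 : 0 < p := by linarith
  set c : ℕ → Ω → ℝ := fun n ω => |w n ω| ^ p * |(μ[fun ω => |η n ω| ^ p|F n]) ω| with hc
  have hc0 : ∀ n ω, 0 ≤ c n ω := fun n ω => by simp only [hc]; positivity
  have hcm : ∀ n, Measurable[F n] (c n) := by
    intro n
    have h1 : Measurable[F n] (w n) := (hwm n).measurable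
    have h2 : Measurable[F n] (μ[fun ω => |η n ω| ^ p|F n]) :=
      stronglyMeasurable_condExp.measurable
    have h3 : Measurable fun x : ℝ => |x| ^ p := by fun_prop
    have h4 : Measurable fun x : ℝ => |x| := by fun_prop
    exact (h3.comp h1).mul (h4.comp h2)
  set A : ℕ → ℕ → Set Ω := fun K n =>
    {ω | ∑ k ∈ Finset.range (n + 1), c k ω ≤ K} ∩ {ω | |w n ω| ≤ K} with hA
  have hAm : ∀ K n, MeasurableSet[F n] (A K n) := by
    intro K n
    have h1 : Measurable[F n] (w n) := (hwm n).measurable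
    have h4 : Measurable fun x : ℝ => |x| := by fun_prop
    have h5 : Measurable[F n] fun ω => ∑ k ∈ Finset.range (n + 1), c k ω := by
      apply Finset.measurable_fun_sum
      intro k hk
      exact (hcm k).mono (F.mono (by have := Finset.mem_range.1 hk; omega)) le_rfl
    exact MeasurableSet.inter (h5 measurableSet_Iic) ((h4.comp h1) measurableSet_Iic)
  have key : ∀ K : ℕ, ∀ᵐ ω ∂μ, ∃ l, Tendsto
      (fun n => ∑ k ∈ Finset.range n, (A K k).indicator (w k) ω * η k ω) atTop (𝓝 l) := by
    intro K
    have hwm' : ∀ n, StronglyMeasurable[F n] ((A K n).indicator (w n)) :=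
      fun n => (hwm n).indicator (hAm K n)
    have hwb : ∀ n ω, ‖(A K n).indicator (w n) ω‖ ≤ K := by
      intro n ω
      by_cases h : ω ∈ A K n
      · rw [Set.indicator_of_mem h]; exact h.2
      · rw [Set.indicator_of_notMem h]; simp
    have hwpm : ∀ n, StronglyMeasurable[F n] fun ω => |(A K n).indicator (w n) ω| ^ p := by
      intro n
      have h3 : Measurable fun x : ℝ => |x| ^ p := by fun_prop
      exact (h3.comp (hwm' n).measurable).stronglyMeasurable
    have hwpb : ∀ n ω, ‖|(A K n).indicator (w n) ω| ^ p‖ ≤ (K : ℝ) ^ p := by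
      intro n ω
      rw [Real.norm_of_nonneg (by positivity)]
      exact Real.rpow_le_rpow (abs_nonneg _) (hwb n ω) hp0.le
    have hpi : ∀ n, Integrable
        (fun ω => |(A K n).indicator (w n) ω| ^ p * |η n ω| ^ p) μ := fun n =>
      (hηp n).bdd_mul ((hwpm n).mono (F.le n)).aestronglyMeasurable
          (Eventually.of_forall fun ω => hwpb n ω)
    have hce : ∀ n, μ[fun ω => |(A K n).indicator (w n) ω| ^ p * |η n ω| ^ p|F n] =ᵐ[μ]
        fun ω => |(A K n).indicator (w n) ω| ^ p * (μ[fun ω => |η n ω| ^ p|F n]) ω := fun n =>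
      condExp_stronglyMeasurable_mul_of_bound (μ := μ) (F.le n)
        (hwpm n) (hηp n) _ (Eventually.of_forall fun ω => hwpb n ω)
    refine rv_mart_bdd F (fun k ω => (A K k).indicator (w k) ω * η k ω) p hp1 hp2 ?_ ?_ ?_ ?_ K ?_
    · intro n
      exact ((hwm' n).mono (F.mono (Nat.le_succ n))).mul (hηm n)
    · intro n
      exact (hηi n).bdd_mul ((hwm' n).mono (F.le n)).aestronglyMeasurable
          (Eventually.of_forall fun ω => hwb n ω)
    · intro n
      have := condExp_stronglyMeasurable_mul_of_bound (μ := μ) (F.le n)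
        (hwm' n) (hηi n) _ (Eventually.of_forall fun ω => hwb n ω)
      refine EventuallyEq.trans this ?_
      filter_upwards [hη0 n] with ω h
      simp [h]
    · intro n
      refine (hpi n).congr (Eventually.of_forall fun ω => ?_)
      simp only [abs_mul]
      rw [Real.mul_rpow (abs_nonneg _) (abs_nonneg _)]
    · intro n
      have h1 : ∀ k, ∫ ω, |(A K k).indicator (w k) ω * η k ω| ^ p ∂μ
          = ∫ ω, |(A K k).indicator (w k) ω| ^ p * (μ[fun ω => |η k ω| ^ p|F k]) ω ∂μ := by
        intro k
        rw [← integral_congr_ae (hce k), integral_condExp (F.le k)]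
        congr 1
        ext ω
        rw [abs_mul, Real.mul_rpow (abs_nonneg _) (abs_nonneg _)]
      have h2 : ∀ k, Integrable (fun ω =>
          |(A K k).indicator (w k) ω| ^ p * (μ[fun ω => |η k ω| ^ p|F k]) ω) μ := fun k =>
        (integrable_condExp (μ := μ)).congr (hce k)
      simp_rw [h1]
      rw [← integral_finsetSum _ fun k _ => h2 k]
      have h3 : ∀ ω, ∑ k ∈ Finset.range n,
          |(A K k).indicator (w k) ω| ^ p * (μ[fun ω => |η k ω| ^ p|F k]) ω ≤ K := by
        intro ω
        have h4 : ∀ n, ∑ k ∈ Finset.range n, (A K k).indicator (c k) ω ≤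
            min (K : ℝ) (∑ k ∈ Finset.range n, c k ω) := by
          intro n
          induction n with
          | zero => simp
          | succ n ih =>
            rw [Finset.sum_range_succ]
            have ih1 := ih.trans (min_le_left _ _)
            have ih2 := ih.trans (min_le_right _ _)
            by_cases h : ω ∈ A K n
            · rw [Set.indicator_of_mem h]
              have h5 := h.1
              simp only [Set.mem_ofPred_eq] at h5
              rw [Finset.sum_range_succ] at h5 ⊢
              apply le_min <;> linarith
            · rw [Set.indicator_of_notMem h, Finset.sum_range_succ]
              have := hc0 n ω
              apply le_min <;> linarith
        refine le_trans (Finset.sum_le_sum fun k _ => ?_) ((h4 n).trans (min_le_left _ _))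
        by_cases h : ω ∈ A K k
        · rw [Set.indicator_of_mem h, Set.indicator_of_mem h]
          simp only [hc]
          exact mul_le_mul_of_nonneg_left (le_abs_self _) (by positivity)
        · rw [Set.indicator_of_notMem h, Set.indicator_of_notMem h]
          simp [Real.zero_rpow hp0.ne']
      calc _ ≤ ∫ ω, (K : ℝ) ∂μ := integral_mono (integrable_finsetSum _ fun k _ => h2 k)
            (integrable_const _) h3
        _ = K := by simp
  have hnn : ∀ᵐ ω ∂μ, ∀ n, 0 ≤ (μ[fun ω => |η n ω| ^ p|F n]) ω := by
    rw [ae_all_iff]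
    intro n
    exact condExp_nonneg (Eventually.of_forall fun ω => by positivity)
  filter_upwards [ae_all_iff.2 key, hηC, hws, hnn] with ω h1 ⟨C, hC⟩ h3 h4
  have hsumc : Summable fun n => c n ω := by
    refine Summable.of_nonneg_of_le (fun n => hc0 n ω) (fun n => ?_) (h3.mul_right C)
    simp only [hc]
    rw [abs_of_nonneg (h4 n)]
    exact mul_le_mul_of_nonneg_left (hC n) (by positivity)
  have hwbd : ∃ B, ∀ n, |w n ω| ≤ B := by
    have h5 := h3.tendsto_atTop_zero.bddAbove_range
    obtain ⟨B, hB⟩ := h5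
    refine ⟨max 1 B, fun n => ?_⟩
    have h6 : |w n ω| ^ p ≤ B := hB ⟨n, rfl⟩
    rcases le_or_gt |w n ω| 1 with h | h
    · exact h.trans (le_max_left _ _)
    · refine le_trans ?_ (h6.trans (le_max_right _ _))
      conv_lhs => rw [← Real.rpow_one |w n ω|]
      exact Real.rpow_le_rpow_of_exponent_le h.le hp1
  obtain ⟨B, hB⟩ := hwbd
  obtain ⟨K, hK⟩ := exists_nat_ge (max B (∑' n, c n ω))
  obtain ⟨l, hl⟩ := h1 K
  refine ⟨l, hl.congr fun n => Finset.sum_congr rfl fun k _ => ?_⟩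
  rw [Set.indicator_of_mem]
  refine ⟨?_, (hB k).trans ((le_max_left _ _).trans hK)⟩
  exact (hsumc.sum_le_tsum _ fun i _ => hc0 i ω).trans ((le_max_right _ _).trans hK)

lemma rv_kronecker (b x : ℕ → ℝ) (hb : Monotone b) (hbt : Tendsto b atTop atTop)
    (hx : ∃ l, Tendsto (fun n => ∑ k ∈ Finset.range n, x k) atTop (𝓝 l)) :
    (fun n => ∑ k ∈ Finset.range (n + 1), b k * x k) =o[atTop] b := by
  obtain ⟨l, hl⟩ := hx
  set r : ℕ → ℝ := fun n => ∑ k ∈ Finset.range n, x k - l with hr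
  have hr0 : Tendsto r atTop (𝓝 0) := by
    simpa [hr] using hl.sub_const l
  have hid : ∀ n, ∑ k ∈ Finset.range (n + 1), b k * x k
      = b n * r (n + 1) - b 0 * r 0 - ∑ k ∈ Finset.range n, r (k + 1) * (b (k + 1) - b k) := by
    intro n
    induction n with
    | zero => simp [hr]; ring
    | succ n ih =>
      rw [Finset.sum_range_succ, ih, Finset.sum_range_succ _ n]
      have : r (n + 1 + 1) = r (n + 1) + x (n + 1) := by
        simp only [hr]; rw [Finset.sum_range_succ _ (n + 1)]; ring
      rw [this]; ring
  have hr1 : Tendsto (fun n => r (n + 1)) atTop (𝓝 0) := hr0.comp (tendsto_add_atTop_nat 1)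
  have hr1' : (fun n => r (n + 1)) =o[atTop] (fun _ => (1 : ℝ)) :=
    (Asymptotics.isLittleO_one_iff ℝ).2 hr1
  have hconst : ∀ c : ℝ, (fun _ : ℕ => c) =o[atTop] b := fun c =>
    Asymptotics.isLittleO_const_left.2 (Or.inr (tendsto_norm_atTop_atTop.comp hbt))
  have h1 : (fun n => b n * r (n + 1)) =o[atTop] b := by
    simpa using (Asymptotics.isBigO_refl b atTop).mul_isLittleO hr1'
  have hs : ∀ n, ∑ k ∈ Finset.range n, (b (k + 1) - b k) = b n - b 0 := fun n =>
    Finset.sum_range_sub b n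
  have h2 : (fun n => ∑ k ∈ Finset.range n, r (k + 1) * (b (k + 1) - b k)) =o[atTop]
      fun n => ∑ k ∈ Finset.range n, (b (k + 1) - b k) := by
    apply Asymptotics.IsLittleO.sum_range
    · simpa using hr1'.mul_isBigO (Asymptotics.isBigO_refl (fun k => b (k + 1) - b k) atTop)
    · intro k; exact sub_nonneg.2 (hb (Nat.le_succ k))
    · simp_rw [hs]; exact tendsto_atTop_add_const_right _ _ hbt
  simp_rw [hs] at h2
  have h3 : (fun n => b n - b 0) =O[atTop] b :=
    (Asymptotics.isBigO_refl b atTop).sub (hconst _).isBigO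
  simp_rw [hid]
  exact (h1.sub (hconst _)).sub (h2.trans_isBigO h3)

lemma rv_summable (U v : ℕ → ℝ) (p : ℝ) (hp1 : 1 < p) (hp2 : p ≤ 2) (hU1 : ∀ n, 1 ≤ U n)
    (hv0 : ∀ n, 0 ≤ v n)
    (hv : ∀ n, v (n + 1) ≤ U (n + 1) - U n) : Summable fun n => v n / U n ^ p := by
  rw [← summable_nat_add_iff 1]
  have hU0 : ∀ n, 0 < U n := fun n => by linarith [hU1 n]
  have hp0 : 0 < p - 1 := by linarith
  have hstep : ∀ n, v (n + 1) / U (n + 1) ^ p ≤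
      (p - 1)⁻¹ * ((U n ^ (p - 1))⁻¹ - (U (n + 1) ^ (p - 1))⁻¹) := by
    intro n
    set A := U n
    set B := U (n + 1)
    have hA : 0 < A := hU0 n
    have hB : 0 < B := hU0 (n + 1)
    have hAB : A ≤ B := by have := hv n; have := hv0 (n + 1); simp only [A, B]; linarith
    have hr : A / B ≤ 1 := (div_le_one hB).2 hAB
    have hr0 : 0 < A / B := by positivity
    have h1 := rpow_one_add_le_one_add_mul_self (s := A / B - 1) (by linarith) hp0.le
      (by linarith : p - 1 ≤ 1)
    rw [add_sub_cancel, Real.div_rpow hA.le hB.le] at h1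
    set a := A ^ (p - 1)
    set b := B ^ (p - 1)
    have ha : 0 < a := Real.rpow_pos_of_pos hA _
    have hb : 0 < b := Real.rpow_pos_of_pos hB _
    have hBp : B ^ p = B * b := by
      have := Real.rpow_add hB 1 (p - 1)
      rw [Real.rpow_one] at this
      rw [← this]; congr 1; ring
    rw [hBp]
    have hx : (p - 1) * (1 - A / B) ≤ 1 - a / b := by linarith
    have h2 : v (n + 1) / (B * b) ≤ (1 - A / B) * b⁻¹ := by
      have : (1 - A / B) * b⁻¹ = (B - A) / (B * b) := by field_simp
      rw [this]
      exact div_le_div_of_nonneg_right (hv n) (by positivity)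
    have hx2 : 1 - A / B ≤ (p - 1)⁻¹ * (1 - a / b) := by
      rw [inv_mul_eq_div, le_div_iff₀ hp0]; linarith
    have h3 : (1 - a / b) * b⁻¹ ≤ a⁻¹ - b⁻¹ := by
      have hab : 0 ≤ (a - b) ^ 2 := sq_nonneg _
      have : a⁻¹ - b⁻¹ - (1 - a / b) * b⁻¹ = (a - b) ^ 2 / (a * b ^ 2) := by
        field_simp; ring
      have h4 : 0 ≤ (a - b) ^ 2 / (a * b ^ 2) := by positivity
      linarith
    calc _ ≤ _ := h2
      _ ≤ ((p - 1)⁻¹ * (1 - a / b)) * b⁻¹ := by gcongr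
      _ = (p - 1)⁻¹ * ((1 - a / b) * b⁻¹) := by ring
      _ ≤ _ := by gcongr
  refine summable_of_sum_range_le (c := (p - 1)⁻¹ * (U 0 ^ (p - 1))⁻¹)
    (fun n => div_nonneg (hv0 _) (Real.rpow_nonneg (hU0 _).le _)) fun n => ?_
  refine (Finset.sum_le_sum fun k _ => hstep k).trans ?_
  rw [← Finset.mul_sum, Finset.sum_range_sub']
  have : 0 < (U n ^ (p - 1))⁻¹ := inv_pos.2 (Real.rpow_pos_of_pos (hU0 n) _)
  gcongr
  linarith


lemma rv_bigO_aux (T U R : ℕ → ℝ) (C : ℝ) (hT1 : ∀ n, 1 ≤ T n) (hU0 : ∀ n, 0 ≤ U n)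
    (hR : R =o[atTop] U) (h : ∀ n, U n ≤ C * T n + R n) : U =O[atTop] T := by
  refine Asymptotics.IsBigO.of_bound (2 * C) ?_
  filter_upwards [hR.bound (show (0 : ℝ) < 1 / 2 by norm_num)] with n hn
  have h1 := h n
  have h2 := (abs_le.1 hn).2
  rw [Real.norm_of_nonneg (hU0 n)] at h2 ⊢
  rw [Real.norm_of_nonneg (by linarith [hT1 n])]
  linarith

lemma rv_const_littleO (T : ℕ → ℝ) (hT : Tendsto T atTop atTop) (c : ℝ) :
    (fun _ : ℕ => c) =o[atTop] T :=
  Asymptotics.isLittleO_const_left.2 (Or.inr (tendsto_norm_atTop_atTop.comp hT))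

lemma rv_scalar_det (φ e M s T U : ℕ → ℝ) (σ2 : ℝ)
    (hs0 : 0 < s 0) (hs : ∀ n, s (n + 1) = s n + φ n ^ 2)
    (hM : ∀ n, M (n + 1) = M n + φ n * e n)
    (hT : ∀ n, T n = 1 + (Real.log (s (n + 1)) - Real.log (s 0)))
    (hU : ∀ n, U n = T n + ∑ k ∈ Finset.range (n + 1), (φ k * M k / s (k + 1)) ^ 2)
    (hst : Tendsto s atTop atTop)
    (h1 : ∃ l, Tendsto (fun n => ∑ k ∈ Finset.range n,
      (φ k * M k / s (k + 1) / U k) * e k) atTop (𝓝 l))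
    (h2 : ∃ l, Tendsto (fun n => ∑ k ∈ Finset.range n,
      (φ k ^ 2 / s (k + 1) / U k) * (e k ^ 2 - σ2)) atTop (𝓝 l)) :
    (fun n => M (n + 1) ^ 2) =o[atTop] fun n => s (n + 1) * T n := by
  have hsm : Monotone s := monotone_nat_of_le_succ fun n => by rw [hs]; nlinarith [sq_nonneg (φ n)]
  have hsp : ∀ n, 0 < s n := fun n => lt_of_lt_of_le hs0 (hsm (Nat.zero_le n))
  have hTm : Monotone T := monotone_nat_of_le_succ fun n => by
    rw [hT, hT]
    have := Real.log_le_log (hsp (n + 1)) (hsm (Nat.le_succ (n + 1)))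
    linarith
  have hT1 : ∀ n, 1 ≤ T n := fun n => by
    rw [hT]
    have := Real.log_le_log hs0 (hsm (Nat.zero_le (n + 1)))
    linarith
  have hTt : Tendsto T atTop atTop := by
    have : T = fun n => 1 + (Real.log (s (n + 1)) - Real.log (s 0)) := funext hT
    rw [this]
    apply tendsto_atTop_add_const_left
    apply tendsto_atTop_add_const_right
    exact Real.tendsto_log_atTop.comp (hst.comp (tendsto_add_atTop_nat 1))
  have hUT : ∀ n, T n ≤ U n := fun n => by
    rw [hU]; exact le_add_of_nonneg_right (Finset.sum_nonneg fun _ _ => sq_nonneg _)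
  have hUm : Monotone U := monotone_nat_of_le_succ fun n => by
    rw [hU, hU, Finset.sum_range_succ _ (n + 1)]
    have := hTm (Nat.le_succ n)
    have := sq_nonneg (φ (n + 1) * M (n + 1) / s (n + 1 + 1))
    simp only [Nat.succ_eq_add_one] at *
    linarith
  have hUp : ∀ n, 0 < U n := fun n => by linarith [hUT n, hT1 n]
  have hUt : Tendsto U atTop atTop := tendsto_atTop_mono hUT hTt
  set x : ℕ → ℝ := fun k => 2 * ((φ k * M k / s (k + 1) / U k) * e k) +
    (φ k ^ 2 / s (k + 1) / U k) * (e k ^ 2 - σ2) with hx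
  have hxc : ∃ l, Tendsto (fun n => ∑ k ∈ Finset.range n, x k) atTop (𝓝 l) := by
    obtain ⟨l1, h1⟩ := h1
    obtain ⟨l2, h2⟩ := h2
    refine ⟨2 * l1 + l2, ((h1.const_mul 2).add h2).congr fun n => ?_⟩
    simp only [hx]
    rw [Finset.sum_add_distrib, Finset.mul_sum]
  have k1 := rv_kronecker U x hUm hUt hxc
  have hflog : ∀ n, φ n ^ 2 / s (n + 1) ≤ Real.log (s (n + 1)) - Real.log (s n) := by
    intro n
    have h3 := Real.log_le_sub_one_of_pos (div_pos (hsp n) (hsp (n + 1)))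
    rw [Real.log_div (hsp n).ne' (hsp (n + 1)).ne'] at h3
    have : φ n ^ 2 / s (n + 1) = 1 - s n / s (n + 1) := by
      have := (hsp (n + 1)).ne'
      field_simp
      rw [hs]; ring
    linarith
  have hfsum : ∀ n, ∑ k ∈ Finset.range (n + 1), φ k ^ 2 / s (k + 1) ≤ T n := by
    intro n
    refine (Finset.sum_le_sum fun k _ => hflog k).trans ?_
    rw [Finset.sum_range_sub (fun k => Real.log (s k)), hT]
    linarith
  have hfsum0 : ∀ n, 0 ≤ ∑ k ∈ Finset.range (n + 1), φ k ^ 2 / s (k + 1) := fun n =>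
    Finset.sum_nonneg fun k _ => div_nonneg (sq_nonneg _) (hsp _).le
  have hid1 : ∀ n, M n ^ 2 / s n + ∑ k ∈ Finset.range n, (φ k ^ 2 / s (k + 1)) * (M k ^ 2 / s k)
      = M 0 ^ 2 / s 0 + ∑ k ∈ Finset.range n, U k * x k
        + σ2 * ∑ k ∈ Finset.range n, φ k ^ 2 / s (k + 1) := by
    intro n
    induction n with
    | zero => simp
    | succ n ih =>
      rw [Finset.sum_range_succ, Finset.sum_range_succ, Finset.sum_range_succ]
      have hstep : M (n + 1) ^ 2 / s (n + 1) + (φ n ^ 2 / s (n + 1)) * (M n ^ 2 / s n)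
          = M n ^ 2 / s n + U n * x n + σ2 * (φ n ^ 2 / s (n + 1)) := by
        simp only [hx]
        have e1 := (hsp (n + 1)).ne'
        have e2 := (hsp n).ne'
        have e3 := (hUp n).ne'
        rw [hM]
        rw [hs n] at e1 ⊢
        field_simp
        ring
      linarith
  have hUO : U =O[atTop] T := by
    refine rv_bigO_aux T U _ (1 + M 0 ^ 2 / s 0 + |σ2|) hT1 (fun n => (hUp n).le) k1 fun n => ?_
    have i1 := hid1 (n + 1)
    have i2 : ∑ k ∈ Finset.range (n + 1), (φ k * M k / s (k + 1)) ^ 2 ≤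
        ∑ k ∈ Finset.range (n + 1), (φ k ^ 2 / s (k + 1)) * (M k ^ 2 / s k) := by
      refine Finset.sum_le_sum fun k _ => ?_
      have : (φ k * M k / s (k + 1)) ^ 2 = (φ k ^ 2 / s (k + 1)) * (M k ^ 2 / s (k + 1)) := by
        ring
      rw [this]
      have h5 := hsp k
      have h6 := hsp (k + 1)
      have h7 : s k ≤ s (k + 1) := hsm (Nat.le_succ k)
      gcongr
    have i3 : 0 ≤ M (n + 1) ^ 2 / s (n + 1) := div_nonneg (sq_nonneg _) (hsp _).le
    have i4 : σ2 * ∑ k ∈ Finset.range (n + 1), φ k ^ 2 / s (k + 1) ≤ |σ2| * T n :=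
      (mul_le_mul_of_nonneg_right (le_abs_self _) (hfsum0 n)).trans
        (mul_le_mul_of_nonneg_left (hfsum n) (abs_nonneg _))
    have i5 : M 0 ^ 2 / s 0 ≤ M 0 ^ 2 / s 0 * T n :=
      le_mul_of_one_le_right (div_nonneg (sq_nonneg _) hs0.le) (hT1 n)
    have i6 := hU n
    have i7 : (1 + M 0 ^ 2 / s 0 + |σ2|) * T n = T n + M 0 ^ 2 / s 0 * T n + |σ2| * T n := by ring
    rw [i7]
    linarith
  have hst1 : Tendsto (fun n => s (n + 1)) atTop atTop := hst.comp (tendsto_add_atTop_nat 1)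
  have k2 := rv_kronecker (fun n => s (n + 1) * U n) x
    (fun i j hij => mul_le_mul (hsm (Nat.succ_le_succ hij)) (hUm hij) (hUp i).le (hsp _).le)
    (hst1.atTop_mul_atTop₀ hUt) hxc
  have hid2 : ∀ n, M n ^ 2 = M 0 ^ 2 + ∑ k ∈ Finset.range n, (s (k + 1) * U k) * x k
        + σ2 * (s n - s 0) := by
    intro n
    induction n with
    | zero => simp
    | succ n ih =>
      rw [Finset.sum_range_succ, hM, hs n, add_sq, ih]
      have : (s n + φ n ^ 2) * U n * x n = 2 * φ n * M n * e n + φ n ^ 2 * (e n ^ 2 - σ2) := by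
        rw [← hs]
        simp only [hx]
        have e1 := (hsp (n + 1)).ne'
        have e3 := (hUp n).ne'
        field_simp
      rw [this]; ring
  have hsT : Tendsto (fun n => s (n + 1) * T n) atTop atTop := hst1.atTop_mul_atTop₀ hTt
  have j1 : (fun n => ∑ k ∈ Finset.range (n + 1), (s (k + 1) * U k) * x k) =o[atTop]
      fun n => s (n + 1) * T n :=
    k2.trans_isBigO ((Asymptotics.isBigO_refl _ _).mul hUO)
  have j2 : (fun n => s (n + 1)) =o[atTop] fun n => s (n + 1) * T n := by
    simpa using (Asymptotics.isBigO_refl (fun n => s (n + 1)) atTop).mul_isLittleO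
      (rv_const_littleO T hTt 1)
  have j3 : (fun n => M 0 ^ 2 + ∑ k ∈ Finset.range (n + 1), (s (k + 1) * U k) * x k
        + σ2 * (s (n + 1) - s 0)) =o[atTop] fun n => s (n + 1) * T n :=
    ((rv_const_littleO _ hsT _).add j1).add
      ((j2.sub (rv_const_littleO _ hsT _)).const_mul_left _)
  exact j3.congr_left fun n => (hid2 (n + 1)).symm

lemma rv_main_det (f π e V dd T U : ℕ → ℝ) (σ2 : ℝ)
    (hd : ∀ n, 0 < dd n) (hf : ∀ n, f n = 1 - dd n / dd (n + 1)) (hf0 : ∀ n, 0 ≤ f n)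
    (hft : Tendsto f atTop (𝓝 0))
    (hV : ∀ n, V (n + 1) = V n + 2 * ((1 - f n) * π n * e n) + f n * e n ^ 2
      - (1 - f n) * π n ^ 2)
    (hT : ∀ n, T n = 1 + (Real.log (dd (n + 1)) - Real.log (dd 0)))
    (hU : ∀ n, U n = T n + ∑ k ∈ Finset.range (n + 1), π k ^ 2)
    (hdt : Tendsto dd atTop atTop)
    (hVo : (fun n => V (n + 1)) =o[atTop] T)
    (h1 : ∃ l, Tendsto (fun n => ∑ k ∈ Finset.range n, (π k / U k) * e k) atTop (𝓝 l))
    (h2 : ∃ l, Tendsto (fun n => ∑ k ∈ Finset.range n,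
      ((1 - f k) * π k / U k) * e k) atTop (𝓝 l))
    (h3 : ∃ l, Tendsto (fun n => ∑ k ∈ Finset.range n,
      (f k / U k) * (e k ^ 2 - σ2)) atTop (𝓝 l)) :
    (fun n => ∑ k ∈ Finset.range (n + 1), (π k ^ 2 - 2 * (π k * e k)) - σ2 * T n) =o[atTop] T := by
  set t : ℕ → ℝ := fun n => Real.log (dd (n + 1)) - Real.log (dd n) with ht
  have hflog : ∀ n, f n ≤ t n := by
    intro n
    have h3 := Real.log_le_sub_one_of_pos (div_pos (hd n) (hd (n + 1)))
    rw [Real.log_div (hd n).ne' (hd (n + 1)).ne'] at h3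
    rw [hf]; simp only [ht]; linarith
  have ht0 : ∀ n, 0 ≤ t n := fun n => (hf0 n).trans (hflog n)
  have hts : ∀ n, ∑ k ∈ Finset.range n, t k = Real.log (dd n) - Real.log (dd 0) := fun n =>
    Finset.sum_range_sub (fun k => Real.log (dd k)) n
  have hTs : ∀ n, T n = 1 + ∑ k ∈ Finset.range (n + 1), t k := fun n => by rw [hT, hts]
  have hT1 : ∀ n, 1 ≤ T n := fun n => by
    rw [hTs]; linarith [Finset.sum_nonneg fun k (_ : k ∈ Finset.range (n + 1)) => ht0 k]
  have htst : Tendsto (fun n => ∑ k ∈ Finset.range n, t k) atTop atTop := by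
    simp_rw [hts]
    apply tendsto_atTop_add_const_right
    exact Real.tendsto_log_atTop.comp hdt
  have hTt : Tendsto T atTop atTop := by
    have : T = fun n => 1 + ∑ k ∈ Finset.range (n + 1), t k := funext hTs
    rw [this]
    apply tendsto_atTop_add_const_left
    exact htst.comp (tendsto_add_atTop_nat 1)
  have hUT : ∀ n, T n ≤ U n := fun n => by
    rw [hU]; exact le_add_of_nonneg_right (Finset.sum_nonneg fun _ _ => sq_nonneg _)
  have hUm : Monotone U := monotone_nat_of_le_succ fun n => by
    rw [hU, hU, hTs, hTs, Finset.sum_range_succ _ (n + 1), Finset.sum_range_succ _ (n + 1)]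
    have := sq_nonneg (π (n + 1))
    have := ht0 (n + 1)
    linarith
  have hUp : ∀ n, 0 < U n := fun n => by linarith [hUT n, hT1 n]
  have hUt : Tendsto U atTop atTop := tendsto_atTop_mono hUT hTt
  have hTU : T =O[atTop] U := Asymptotics.IsBigO.of_bound 1 (Eventually.of_forall fun n => by
    rw [Real.norm_of_nonneg (by linarith [hT1 n]), Real.norm_of_nonneg (hUp n).le]
    linarith [hUT n])
  have k1 := rv_kronecker U _ hUm hUt h1
  have k2 := rv_kronecker U _ hUm hUt h2
  have k3 := rv_kronecker U _ hUm hUt h3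
  have r1 : ∀ k, U k * (π k / U k * e k) = π k * e k := fun k => by
    have := (hUp k).ne'; field_simp
  have r2 : ∀ k, U k * ((1 - f k) * π k / U k * e k) = (1 - f k) * π k * e k := fun k => by
    have := (hUp k).ne'; field_simp
  have r3 : ∀ k, U k * (f k / U k * (e k ^ 2 - σ2)) = f k * (e k ^ 2 - σ2) := fun k => by
    have := (hUp k).ne'; field_simp
  simp_rw [r1] at k1
  simp_rw [r2] at k2
  simp_rw [r3] at k3
  -- E4
  have k4 : (fun n => ∑ k ∈ Finset.range (n + 1), f k * π k ^ 2) =o[atTop] U := by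
    have a1 : (fun k => f k * π k ^ 2) =o[atTop] fun k => π k ^ 2 + t k := by
      have b1 : f =o[atTop] (fun _ => (1 : ℝ)) := (Asymptotics.isLittleO_one_iff ℝ).2 hft
      have b2 : (fun k => π k ^ 2) =O[atTop] fun k => π k ^ 2 + t k :=
        Asymptotics.IsBigO.of_bound 1 (Eventually.of_forall fun n => by
          have := sq_nonneg (π n)
          have := ht0 n
          rw [Real.norm_of_nonneg (by linarith), Real.norm_of_nonneg (by linarith)]
          linarith)
      simpa using b1.mul_isBigO b2
    have a2 : ∀ n, ∑ k ∈ Finset.range n, t k ≤ ∑ k ∈ Finset.range n, (π k ^ 2 + t k) := fun n =>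
      Finset.sum_le_sum fun k _ => by have := sq_nonneg (π k); linarith
    have a3 := (a1.sum_range (fun k => add_nonneg (sq_nonneg _) (ht0 k))
      (tendsto_atTop_mono a2 htst)).comp_tendsto (tendsto_add_atTop_nat 1)
    refine a3.trans_isBigO ?_
    have a4 : (fun n => U n - 1) =O[atTop] U :=
      (Asymptotics.isBigO_refl U atTop).sub (rv_const_littleO U hUt 1).isBigO
    refine a4.congr_left fun n => ?_
    simp only [Function.comp]
    rw [hU, hTs, Finset.sum_add_distrib]; ring
  -- sum f
  have k5 : (fun n => ∑ k ∈ Finset.range (n + 1), f k - T n) =o[atTop] T := by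
    have a1 : (fun k => f k - t k) =o[atTop] t := by
      rw [Asymptotics.isLittleO_iff]
      intro c hc
      have hlt : ∀ᶠ n in atTop, f n < min (1 / 2) (c / 2) :=
        hft.eventually_lt_const (by positivity)
      filter_upwards [hlt] with n hn
      have c1 := hn.trans_le (min_le_left _ _)
      have c2 := hn.trans_le (min_le_right _ _)
      have c3 : t n ≤ f n / (1 - f n) := by
        have q : 0 < dd (n + 1) / dd n := div_pos (hd _) (hd _)
        have := Real.log_le_sub_one_of_pos q
        rw [Real.log_div (hd (n + 1)).ne' (hd n).ne'] at this
        refine this.trans (le_of_eq ?_)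
        have := (hd n).ne'
        have := (hd (n + 1)).ne'
        rw [hf, sub_sub_cancel]; field_simp
      have c4 : f n / (1 - f n) ≤ f n + c * f n := by
        rw [div_le_iff₀ (by linarith)]
        have := hf0 n
        nlinarith [mul_nonneg this hc.le]
      rw [Real.norm_of_nonneg (ht0 n), Real.norm_eq_abs, abs_sub_comm,
        abs_of_nonneg (by linarith [hflog n])]
      have := mul_le_mul_of_nonneg_left (hflog n) hc.le
      linarith
    have a3 := (a1.sum_range ht0 htst).comp_tendsto (tendsto_add_atTop_nat 1)
    have a5 : (fun n => T n - 1) =O[atTop] T :=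
      (Asymptotics.isBigO_refl T atTop).sub (rv_const_littleO T hTt 1).isBigO
    have a6 := a3.trans_isBigO (a5.congr_left fun n => by
      change T n - 1 = ∑ k ∈ Finset.range (n + 1), t k
      rw [hTs]; ring)
    refine (a6.sub (rv_const_littleO T hTt 1)).congr_left fun n => ?_
    simp only [Function.comp]
    rw [hTs, Finset.sum_sub_distrib]; ring
  have hid : ∀ n, ∑ k ∈ Finset.range n, π k ^ 2 = ∑ k ∈ Finset.range n, f k * π k ^ 2 + V 0 - V n
      + 2 * ∑ k ∈ Finset.range n, (1 - f k) * π k * e k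
      + ∑ k ∈ Finset.range n, f k * (e k ^ 2 - σ2) + σ2 * ∑ k ∈ Finset.range n, f k := by
    intro n
    induction n with
    | zero => simp
    | succ n ih =>
      simp only [Finset.sum_range_succ]
      rw [ih, hV]; ring
  have hR : (fun n => ∑ k ∈ Finset.range (n + 1), f k * π k ^ 2 + V 0 - V (n + 1)
      + 2 * ∑ k ∈ Finset.range (n + 1), (1 - f k) * π k * e k
      + ∑ k ∈ Finset.range (n + 1), f k * (e k ^ 2 - σ2)
      + σ2 * (∑ k ∈ Finset.range (n + 1), f k - T n)) =o[atTop] U :=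
    ((((k4.add (rv_const_littleO U hUt _)).sub (hVo.trans_isBigO hTU)).add
      (k2.const_mul_left 2)).add k3).add ((k5.trans_isBigO hTU).const_mul_left σ2)
  have hUO : U =O[atTop] T := by
    refine rv_bigO_aux T U _ (1 + σ2) hT1 (fun n => (hUp n).le) hR fun n => ?_
    rw [hU, hid]
    apply le_of_eq; ring
  refine ((hR.sub (k1.const_mul_left 2)).trans_isBigO hUO).congr_left fun n => ?_
  rw [Finset.sum_sub_distrib, hid, ← Finset.mul_sum]
  ring


lemma rv_pow_bound (x a q : ℝ) (hq0 : 0 ≤ q) (hq : q ≤ a) : |x| ^ q ≤ 1 + |x| ^ a := by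
  have h0 : 0 ≤ |x| ^ a := by positivity
  rcases le_or_gt |x| 1 with h | h
  · have := Real.rpow_le_one (abs_nonneg x) h hq0
    linarith
  · have := Real.rpow_le_rpow_of_exponent_le h.le hq
    linarith

lemma rv_noise1 {Ω : Type*} {m0 : MeasurableSpace Ω} {μ : Measure Ω} [IsProbabilityMeasure μ]
    (F : Filtration ℕ m0) (e : ℕ → Ω → ℝ) (σ a : ℝ) (ha : 2 < a)
    (hem : ∀ n, StronglyMeasurable[F (n + 1)] (e n))
    (hei : ∀ n, Integrable (e n) μ)
    (he0 : ∀ n, μ[e n|F n] =ᵐ[μ] 0)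
    (hvar : ∀ n, μ[fun ω => e n ω ^ 2|F n] =ᵐ[μ] fun _ => σ ^ 2)
    (hmomint : ∀ n, Integrable (fun ω => |e n ω| ^ a) μ)
    (u U : ℕ → Ω → ℝ) (hu : ∀ n, Measurable[F n] (u n)) (hUm : ∀ n, Measurable[F n] (U n))
    (hU1 : ∀ n ω, 1 ≤ U n ω) (huU : ∀ n ω, u (n + 1) ω ^ 2 ≤ U (n + 1) ω - U n ω) :
    ∀ᵐ ω ∂μ, ∃ l, Tendsto (fun n => ∑ k ∈ Finset.range n, (u k ω / U k ω) * e k ω)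
      atTop (𝓝 l) := by
  have hint : ∀ n, Integrable (fun ω => e n ω ^ 2) μ := by
    intro n
    refine Integrable.mono' ((integrable_const (1 : ℝ)).add (hmomint n))
      ((hei n).aestronglyMeasurable.pow 2) (Eventually.of_forall fun ω => ?_)
    rw [Real.norm_of_nonneg (sq_nonneg _), ← sq_abs, ← Real.rpow_two]
    exact rv_pow_bound _ a 2 (by norm_num) ha.le
  have h2 : ∀ x : ℝ, |x| ^ (2 : ℝ) = x ^ 2 := fun x => by rw [Real.rpow_two, sq_abs]
  refine rv_mart_loc F e (fun n ω => u n ω / U n ω) 2 (by norm_num) le_rfl hem hei he0 ?_ ?_ ?_ ?_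
  · simpa only [h2] using hint
  · simp only [h2]
    filter_upwards [ae_all_iff.2 hvar] with ω h
    exact ⟨σ ^ 2, fun n => (h n).le⟩
  · intro n
    exact ((hu n).div (hUm n)).stronglyMeasurable
  · refine Eventually.of_forall fun ω => ?_
    have := rv_summable (fun n => U n ω) (fun n => u n ω ^ 2) 2 (by norm_num) le_rfl
      (fun n => hU1 n ω) (fun n => sq_nonneg _) (fun n => huU n ω)
    refine this.congr fun n => ?_
    simp only [h2, Real.rpow_two]
    rw [div_pow]

lemma rv_noise2 {Ω : Type*} {m0 : MeasurableSpace Ω} {μ : Measure Ω} [IsProbabilityMeasure μ]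
    (F : Filtration ℕ m0) (e : ℕ → Ω → ℝ) (σ a : ℝ) (ha : 2 < a)
    (hem : ∀ n, StronglyMeasurable[F (n + 1)] (e n))
    (hei : ∀ n, Integrable (e n) μ)
    (hvar : ∀ n, μ[fun ω => e n ω ^ 2|F n] =ᵐ[μ] fun _ => σ ^ 2)
    (hmomint : ∀ n, Integrable (fun ω => |e n ω| ^ a) μ)
    (hmom : ∀ᵐ ω ∂μ, ∃ C : ℝ, ∀ n, (μ[fun ω => |e n ω| ^ a|F n]) ω ≤ C)
    (f U : ℕ → Ω → ℝ) (hf : ∀ n, Measurable[F n] (f n)) (hUm : ∀ n, Measurable[F n] (U n))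
    (hU1 : ∀ n ω, 1 ≤ U n ω) (hf0 : ∀ n ω, 0 ≤ f n ω) (hf1 : ∀ n ω, f n ω ≤ 1)
    (hfU : ∀ n ω, f (n + 1) ω ≤ U (n + 1) ω - U n ω) :
    ∀ᵐ ω ∂μ, ∃ l, Tendsto (fun n => ∑ k ∈ Finset.range n,
      (f k ω / U k ω) * (e k ω ^ 2 - σ ^ 2)) atTop (𝓝 l) := by
  have hint : ∀ n, Integrable (fun ω => e n ω ^ 2) μ := by
    intro n
    refine Integrable.mono' ((integrable_const (1 : ℝ)).add (hmomint n))
      ((hei n).aestronglyMeasurable.pow 2) (Eventually.of_forall fun ω => ?_)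
    rw [Real.norm_of_nonneg (sq_nonneg _), ← sq_abs, ← Real.rpow_two]
    exact rv_pow_bound _ a 2 (by norm_num) ha.le
  set p : ℝ := min (a / 2) 2 with hp
  have hp1 : 1 < p := lt_min (by linarith) (by norm_num)
  have hp2 : p ≤ 2 := min_le_right _ _
  have hpa : 2 * p ≤ a := by have : p ≤ a / 2 := min_le_left _ _; linarith
  have hp0 : 0 < p := by linarith
  set c : ℝ := 1 + (σ ^ 2) ^ p with hc
  have hbd : ∀ x : ℝ, |x ^ 2 - σ ^ 2| ^ p ≤ c + |x| ^ a := by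
    intro x
    have h1 : |x ^ 2 - σ ^ 2| ≤ max (x ^ 2) (σ ^ 2) := by
      rw [abs_le]
      constructor
      · linarith [le_max_right (x ^ 2) (σ ^ 2), sq_nonneg x]
      · linarith [le_max_left (x ^ 2) (σ ^ 2), sq_nonneg σ]
    have h2 : |x ^ 2 - σ ^ 2| ^ p ≤ (x ^ 2) ^ p + (σ ^ 2) ^ p := by
      refine (Real.rpow_le_rpow (abs_nonneg _) h1 hp0.le).trans ?_
      have q1 : 0 ≤ (x ^ 2) ^ p := by positivity
      have q2 : 0 ≤ (σ ^ 2) ^ p := by positivity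
      rcases max_choice (x ^ 2) (σ ^ 2) with h | h <;> rw [h] <;> linarith
    have h3 : (x ^ 2) ^ p = |x| ^ (2 * p) := by
      rw [Real.rpow_mul (abs_nonneg x), Real.rpow_two, sq_abs]
    have h4 := rv_pow_bound x a (2 * p) (by linarith) hpa
    rw [hc]; linarith
  have hηm : ∀ n, StronglyMeasurable[F (n + 1)] (fun ω => e n ω ^ 2 - σ ^ 2) := fun n =>
    ((hem n).pow 2).sub stronglyMeasurable_const
  have hηi : ∀ n, Integrable (fun ω => e n ω ^ 2 - σ ^ 2) μ := fun n =>
    (hint n).sub (integrable_const _)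
  have hci : ∀ n, Integrable ((fun _ => c) + fun ω => |e n ω| ^ a) μ := fun n =>
    (integrable_const c).add (hmomint n)
  have hηp : ∀ n, Integrable (fun ω => |e n ω ^ 2 - σ ^ 2| ^ p) μ := by
    intro n
    refine Integrable.mono' (hci n) ?_ (Eventually.of_forall fun ω => ?_)
    · have h3 : Measurable fun x : ℝ => |x| ^ p := by fun_prop
      exact (h3.comp ((hηm n).mono (F.le _)).measurable).aestronglyMeasurable
    · rw [Real.norm_of_nonneg (by positivity)]
      exact hbd _
  refine rv_mart_loc F (fun n ω => e n ω ^ 2 - σ ^ 2) (fun n ω => f n ω / U n ω) p hp1.le hp2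
    hηm hηi ?_ hηp ?_ ?_ ?_
  · intro n
    have h1 := condExp_sub (hint n) (integrable_const (μ := μ) (σ ^ 2)) (F n)
    refine EventuallyEq.trans h1 ?_
    rw [condExp_const (F.le n)]
    filter_upwards [hvar n] with ω h
    simp [h]
  · have h1 : ∀ n, μ[fun ω => |e n ω ^ 2 - σ ^ 2| ^ p|F n] ≤ᵐ[μ]
        μ[(fun _ => c) + fun ω => |e n ω| ^ a|F n] := fun n =>
      condExp_mono (hηp n) (hci n) (Eventually.of_forall fun ω => hbd _)
    have h2 : ∀ n, μ[(fun _ => c) + fun ω => |e n ω| ^ a|F n] =ᵐ[μ]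
        (fun _ => c) + μ[fun ω => |e n ω| ^ a|F n] := by
      intro n
      have := condExp_add (integrable_const (μ := μ) c) (hmomint n) (F n)
      rwa [condExp_const (F.le n)] at this
    filter_upwards [ae_all_iff.2 h1, ae_all_iff.2 h2, hmom] with ω g1 g2 ⟨C, hC⟩
    refine ⟨c + C, fun n => (g1 n).trans ?_⟩
    rw [g2 n]
    simp only [Pi.add_apply]
    linarith [hC n]
  · intro n
    exact ((hf n).div (hUm n)).stronglyMeasurable
  · refine Eventually.of_forall fun ω => ?_
    have := rv_summable (fun n => U n ω) (fun n => f n ω) p hp1 hp2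
      (fun n => hU1 n ω) (fun n => hf0 n ω) (fun n => hfU n ω)
    refine Summable.of_nonneg_of_le (fun n => by positivity) (fun n => ?_) this
    have hU0 : 0 < U n ω := by linarith [hU1 n ω]
    rw [abs_of_nonneg (div_nonneg (hf0 n ω) hU0.le), Real.div_rpow (hf0 n ω) hU0.le]
    have : f n ω ^ p ≤ f n ω := by
      rcases eq_or_lt_of_le (hf0 n ω) with h | h
      · rw [← h, Real.zero_rpow hp0.ne']
      · conv_rhs => rw [← Real.rpow_one (f n ω)]
        exact Real.rpow_le_rpow_of_exponent_ge h (hf1 n ω) hp1.le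
    gcongr

lemma rv_scalar {Ω : Type*} {m0 : MeasurableSpace Ω} {μ : Measure Ω} [IsProbabilityMeasure μ]
    (F : Filtration ℕ m0) (e : ℕ → Ω → ℝ) (σ a : ℝ) (ha : 2 < a)
    (hem : ∀ n, StronglyMeasurable[F (n + 1)] (e n))
    (hei : ∀ n, Integrable (e n) μ)
    (he0 : ∀ n, μ[e n|F n] =ᵐ[μ] 0)
    (hvar : ∀ n, μ[fun ω => e n ω ^ 2|F n] =ᵐ[μ] fun _ => σ ^ 2)
    (hmomint : ∀ n, Integrable (fun ω => |e n ω| ^ a) μ)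
    (hmom : ∀ᵐ ω ∂μ, ∃ C : ℝ, ∀ n, (μ[fun ω => |e n ω| ^ a|F n]) ω ≤ C)
    (φ s M : ℕ → Ω → ℝ) (hφ : ∀ n, Measurable[F n] (φ n))
    (hsm : ∀ n, Measurable[F n] (s (n + 1))) (hMm : ∀ n, Measurable[F n] (M n))
    (s0 : ℝ) (hs0 : 0 < s0) (hs00 : ∀ ω, s 0 ω = s0)
    (hs : ∀ n ω, s (n + 1) ω = s n ω + φ n ω ^ 2)
    (hM : ∀ n ω, M (n + 1) ω = M n ω + φ n ω * e n ω)
    (hst : ∀ᵐ ω ∂μ, Tendsto (fun n => s n ω) atTop atTop) :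
    ∀ᵐ ω ∂μ, (fun n => M (n + 1) ω ^ 2) =o[atTop]
      fun n => s (n + 1) ω * (1 + (Real.log (s (n + 1) ω) - Real.log (s 0 ω))) := by
  set T : ℕ → Ω → ℝ := fun n ω => 1 + (Real.log (s (n + 1) ω) - Real.log (s 0 ω)) with hT
  set u : ℕ → Ω → ℝ := fun k ω => φ k ω * M k ω / s (k + 1) ω with hu
  set U : ℕ → Ω → ℝ := fun n ω => T n ω + ∑ k ∈ Finset.range (n + 1), u k ω ^ 2 with hU
  have hsmono : ∀ ω, Monotone fun n => s n ω := fun ω =>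
    monotone_nat_of_le_succ fun n => by rw [hs]; nlinarith [sq_nonneg (φ n ω)]
  have hsp : ∀ n ω, 0 < s n ω := fun n ω =>
    lt_of_lt_of_le (by simp only [hs00]; exact hs0) (hsmono ω (Nat.zero_le n))
  have hT1 : ∀ n ω, 1 ≤ T n ω := fun n ω => by
    have := Real.log_le_log (hsp 0 ω) (hsmono ω (Nat.zero_le (n + 1)))
    simp only [hT]
    linarith
  have hU1 : ∀ n ω, 1 ≤ U n ω := fun n ω => by
    have : 0 ≤ ∑ k ∈ Finset.range (n + 1), u k ω ^ 2 := Finset.sum_nonneg fun _ _ => sq_nonneg _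
    simp only [hU]; linarith [hT1 n ω]
  have hum : ∀ n, Measurable[F n] (u n) := fun n => ((hφ n).mul (hMm n)).div (hsm n)
  have hTm : ∀ n, Measurable[F n] (T n) := fun n => by
    have h1 : Measurable[F n] fun ω => Real.log (s (n + 1) ω) := Real.measurable_log.comp (hsm n)
    have h2 : T n = fun ω => 1 + (Real.log (s (n + 1) ω) - Real.log s0) := by
      ext ω; simp only [hT, hs00]
    rw [h2]
    exact (h1.sub_const _).const_add _
  have hUm : ∀ n, Measurable[F n] (U n) := fun n => by
    refine (hTm n).add (Finset.measurable_fun_sum _ fun k hk => ?_)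
    exact ((hum k).pow_const 2).mono (F.mono (by have := Finset.mem_range.1 hk; omega)) le_rfl
  have hflog : ∀ n ω, φ n ω ^ 2 / s (n + 1) ω ≤ Real.log (s (n + 1) ω) - Real.log (s n ω) := by
    intro n ω
    have h3 := Real.log_le_sub_one_of_pos (div_pos (hsp n ω) (hsp (n + 1) ω))
    rw [Real.log_div (hsp n ω).ne' (hsp (n + 1) ω).ne'] at h3
    have : φ n ω ^ 2 / s (n + 1) ω = 1 - s n ω / s (n + 1) ω := by
      have := (hsp (n + 1) ω).ne'
      field_simp
      rw [hs]; ring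
    linarith
  have hf0 : ∀ n ω, 0 ≤ φ n ω ^ 2 / s (n + 1) ω := fun n ω =>
    div_nonneg (sq_nonneg _) (hsp _ _).le
  have hUdiff : ∀ n ω, U (n + 1) ω - U n ω =
      (Real.log (s (n + 1 + 1) ω) - Real.log (s (n + 1) ω)) + u (n + 1) ω ^ 2 := fun n ω => by
    simp only [hU, hT]; rw [Finset.sum_range_succ _ (n + 1)]; ring
  have c1 := rv_noise1 F e σ a ha hem hei he0 hvar hmomint u U hum hUm hU1 (fun n ω => by
    rw [hUdiff]; linarith [hflog (n + 1) ω, hf0 (n + 1) ω])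
  have c2 := rv_noise2 F e σ a ha hem hei hvar hmomint hmom
    (fun n ω => φ n ω ^ 2 / s (n + 1) ω) U (fun n => ((hφ n).pow_const 2).div (hsm n)) hUm hU1 hf0
    (fun n ω => by
      rw [div_le_one (hsp _ _), hs]; linarith [hsp n ω])
    (fun n ω => by rw [hUdiff]; linarith [hflog (n + 1) ω, sq_nonneg (u (n + 1) ω)])
  filter_upwards [c1, c2, hst] with ω h1 h2 h3
  exact rv_scalar_det (fun n => φ n ω) (fun n => e n ω) (fun n => M n ω) (fun n => s n ω)
    (fun n => T n ω) (fun n => U n ω) (σ ^ 2) (hsp 0 ω) (fun n => hs n ω) (fun n => hM n ω)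
    (fun n => rfl) (fun n => rfl) h3 h1 h2

lemma rv_meas_det {Ω : Type*} {m : MeasurableSpace Ω} {d : ℕ} (A : Ω → Matrix (Fin d) (Fin d) ℝ)
    (hA : ∀ i j, Measurable fun ω => A ω i j) : Measurable fun ω => (A ω).det := by
  simp only [Matrix.det_apply']
  refine Finset.measurable_fun_sum _ fun τ _ => ?_
  exact (Finset.measurable_fun_prod _ fun i _ => hA _ _).const_mul _

lemma rv_meas_inv {Ω : Type*} {m : MeasurableSpace Ω} {d : ℕ} (A : Ω → Matrix (Fin d) (Fin d) ℝ)
    (hA : ∀ i j, Measurable fun ω => A ω i j) (i j : Fin d) :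
    Measurable fun ω => (A ω)⁻¹ i j := by
  have h : ∀ ω, (A ω)⁻¹ i j = (A ω).det⁻¹ * ((A ω).updateRow j (Pi.single i 1)).det := by
    intro ω
    rw [Matrix.inv_def, Matrix.smul_apply, Ring.inverse_eq_inv', smul_eq_mul,
      Matrix.adjugate_apply]
  simp_rw [h]
  refine (rv_meas_det A hA).inv.mul (rv_meas_det _ fun k l => ?_)
  simp only [Matrix.updateRow_apply]
  by_cases hk : k = j
  · simp [hk]
  · simp only [hk, if_false]; exact hA k l

lemma rv_riccati {d : ℕ} (A B : Matrix (Fin d) (Fin d) ℝ) (φ M : Fin d → ℝ) (e : ℝ)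
    (hA : A.PosDef) (hB : B.PosDef) (hAB : B = A + vecMulVec φ φ) :
    (M + e • φ) ⬝ᵥ (B⁻¹ *ᵥ (M + e • φ)) = M ⬝ᵥ (A⁻¹ *ᵥ M)
      + 2 * ((1 - φ ⬝ᵥ (B⁻¹ *ᵥ φ)) * (φ ⬝ᵥ (A⁻¹ *ᵥ M)) * e) + (φ ⬝ᵥ (B⁻¹ *ᵥ φ)) * e ^ 2
      - (1 - φ ⬝ᵥ (B⁻¹ *ᵥ φ)) * (φ ⬝ᵥ (A⁻¹ *ᵥ M)) ^ 2 := by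
  have hAu : IsUnit A.det := hA.det_pos.ne'.isUnit
  have hBu : IsUnit B.det := hB.det_pos.ne'.isUnit
  set y := A⁻¹ *ᵥ M with hy
  set z := B⁻¹ *ᵥ φ with hz
  have hAy : A *ᵥ y = M := by
    rw [hy, Matrix.mulVec_mulVec, Matrix.mul_nonsing_inv _ hAu, Matrix.one_mulVec]
  have hBz : B *ᵥ z = φ := by
    rw [hz, Matrix.mulVec_mulVec, Matrix.mul_nonsing_inv _ hBu, Matrix.one_mulVec]
  have hBy : B *ᵥ y = M + (φ ⬝ᵥ y) • φ := by
    rw [hAB, Matrix.add_mulVec, hAy, Matrix.vecMulVec_mulVec]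
    simp
  have hinv : B⁻¹ *ᵥ (M + e • φ) = y + (e - φ ⬝ᵥ y) • z := by
    have : M + e • φ = B *ᵥ (y + (e - φ ⬝ᵥ y) • z) := by
      rw [Matrix.mulVec_add, Matrix.mulVec_smul, hBy, hBz, sub_smul]; abel
    rw [this, Matrix.mulVec_mulVec, Matrix.nonsing_inv_mul _ hBu, Matrix.one_mulVec]
  have hBt : Bᵀ = B := by
    have := hB.isHermitian
    rwa [Matrix.IsHermitian, Matrix.conjTranspose_eq_transpose_of_trivial] at this
  have hMz : M ⬝ᵥ z = φ ⬝ᵥ y * (1 - φ ⬝ᵥ z) := by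
    have h1 : (B *ᵥ y) ⬝ᵥ z = y ⬝ᵥ φ := by
      conv_lhs => rw [← hBt, Matrix.mulVec_transpose, ← Matrix.dotProduct_mulVec, hBz]
    rw [hBy, add_dotProduct, smul_dotProduct, smul_eq_mul, dotProduct_comm y φ] at h1
    linarith
  rw [hinv, add_dotProduct, dotProduct_add, dotProduct_add, smul_dotProduct, smul_dotProduct,
    dotProduct_smul, dotProduct_smul, hMz]
  simp only [smul_eq_mul]
  ring

lemma rv_det {d : ℕ} (A B : Matrix (Fin d) (Fin d) ℝ) (φ : Fin d → ℝ)
    (hB : B.PosDef) (hAB : B = A + vecMulVec φ φ) :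
    φ ⬝ᵥ (B⁻¹ *ᵥ φ) = 1 - A.det / B.det := by
  have hBu : IsUnit B.det := hB.det_pos.ne'.isUnit
  have h1 : A = B * (1 + replicateCol Unit (-(B⁻¹ *ᵥ φ)) * replicateRow Unit φ) := by
    rw [← Matrix.vecMulVec_eq, Matrix.mul_add, Matrix.mul_one, Matrix.mul_vecMulVec,
      Matrix.mulVec_neg, Matrix.mulVec_mulVec, Matrix.mul_nonsing_inv _ hBu, Matrix.one_mulVec,
      Matrix.neg_vecMulVec, hAB]
    abel
  have h2 : A.det = B.det * (1 - φ ⬝ᵥ (B⁻¹ *ᵥ φ)) := by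
    conv_lhs => rw [h1]
    rw [Matrix.det_mul, Matrix.det_one_add_replicateCol_mul_replicateRow, dotProduct_neg]
    ring
  rw [h2, mul_div_cancel_left₀ _ hB.det_pos.ne']
  ring

/-- `S_{n-1}`, with `S_{-1} = S`. -/
def rvS {d : ℕ} (S : Matrix (Fin d) (Fin d) ℝ) (Φ : ℕ → Fin d → ℝ) (n : ℕ) :
    Matrix (Fin d) (Fin d) ℝ :=
  S + ∑ k ∈ Finset.range n, vecMulVec (Φ k) (Φ k)

/-- The martingale `M_n`. -/
def rvM {d : ℕ} (S : Matrix (Fin d) (Fin d) ℝ) (θ : Fin d → ℝ) (Φ : ℕ → Fin d → ℝ) (e : ℕ → ℝ)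
    (n : ℕ) : Fin d → ℝ :=
  -(S *ᵥ θ) + ∑ k ∈ Finset.range n, e k • Φ k

lemma rvS_succ {d : ℕ} (S : Matrix (Fin d) (Fin d) ℝ) (Φ : ℕ → Fin d → ℝ) (n : ℕ) :
    rvS S Φ (n + 1) = rvS S Φ n + vecMulVec (Φ n) (Φ n) := by
  simp only [rvS]; rw [Finset.sum_range_succ, add_assoc]

lemma rvM_succ {d : ℕ} (S : Matrix (Fin d) (Fin d) ℝ) (θ : Fin d → ℝ) (Φ : ℕ → Fin d → ℝ)
    (e : ℕ → ℝ) (n : ℕ) : rvM S θ Φ e (n + 1) = rvM S θ Φ e n + e n • Φ n := by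
  simp only [rvM]; rw [Finset.sum_range_succ, add_assoc]

lemma rvS_posDef {d : ℕ} (S : Matrix (Fin d) (Fin d) ℝ) (hS : S.PosDef) (Φ : ℕ → Fin d → ℝ)
    (n : ℕ) : (rvS S Φ n).PosDef := by
  induction n with
  | zero => simpa [rvS] using hS
  | succ n ih =>
    rw [rvS_succ]
    have := posSemidef_vecMulVec_self_star (Φ n)
    rw [star_trivial] at this
    exact ih.add_posSemidef this

lemma rv_lsq {Ω : Type*} {d : ℕ} (S : Matrix (Fin d) (Fin d) ℝ) (hS : S.PosDef)
    (Φ : ℕ → Ω → Fin d → ℝ) (X ε : ℕ → Ω → ℝ) (θ : Fin d → ℝ)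
    (hmodel : ∀ n ω, X (n + 1) ω = θ ⬝ᵥ Φ n ω + ε (n + 1) ω) (n : ℕ) (ω : Ω) :
    lsq S Φ X n ω = θ + (rvS S (fun k => Φ k ω) n)⁻¹ *ᵥ
      rvM S θ (fun k => Φ k ω) (fun k => ε (k + 1) ω) n := by
  have hsum : ∀ n, ∑ k ∈ Finset.Icc 1 n, X k ω • Φ (k - 1) ω
      = rvS S (fun k => Φ k ω) n *ᵥ θ + rvM S θ (fun k => Φ k ω) (fun k => ε (k + 1) ω) n := by
    intro n
    induction n with
    | zero => simp [rvS, rvM]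
    | succ n ih =>
      rw [Finset.sum_Icc_succ_top (by omega), ih, rvS_succ, rvM_succ, Matrix.add_mulVec,
        Matrix.vecMulVec_mulVec, hmodel, add_smul, dotProduct_comm θ]
      simp only [Nat.add_sub_cancel, op_smul_eq_smul]
      abel
  have hu : ∀ n, IsUnit (rvS S (fun k => Φ k ω) n).det := fun n =>
    (rvS_posDef S hS _ n).det_pos.ne'.isUnit
  have hfin : ∀ n, (rvS S (fun k => Φ k ω) n)⁻¹ *ᵥ ∑ k ∈ Finset.Icc 1 n, X k ω • Φ (k - 1) ω
      = θ + (rvS S (fun k => Φ k ω) n)⁻¹ *ᵥ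
      rvM S θ (fun k => Φ k ω) (fun k => ε (k + 1) ω) n := by
    intro n
    rw [hsum, Matrix.mulVec_add, Matrix.mulVec_mulVec, Matrix.nonsing_inv_mul _ (hu n),
      Matrix.one_mulVec]
  cases n with
  | zero =>
    rw [← hfin]
    simp [lsq]
  | succ n => exact hfin (n + 1)

lemma rv_V_littleO {d : ℕ} (hd : 0 < d) (S L : Matrix (Fin d) (Fin d) ℝ) (hS : S.PosDef)
    (hL : L.PosDef) (Φ : ℕ → Fin d → ℝ) (M : ℕ → Fin d → ℝ) (α : ℕ → ℝ) (hαpos : ∀ n, 0 < α n)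
    (hαtop : Tendsto α atTop atTop)
    (hconv : Tendsto (fun n => (α n)⁻¹ • rvS S Φ (n + 1)) atTop (𝓝 L))
    (hM : ∀ i, (fun n => M (n + 1) i ^ 2) =o[atTop]
      fun n => rvS S Φ (n + 1) i i *
        (1 + (Real.log (rvS S Φ (n + 1) i i) - Real.log (rvS S Φ 0 i i)))) :
    (fun n => M (n + 1) ⬝ᵥ ((rvS S Φ (n + 1))⁻¹ *ᵥ M (n + 1))) =o[atTop]
      fun n => 1 + (Real.log (rvS S Φ (n + 1)).det - Real.log (rvS S Φ 0).det) := by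
  set T : ℕ → ℝ := fun n => 1 + (Real.log (rvS S Φ (n + 1)).det - Real.log (rvS S Φ 0).det) with hT
  have hp := fun n => rvS_posDef S hS Φ n
  have hdet : Tendsto (fun n => ((α n)⁻¹ • rvS S Φ (n + 1)).det) atTop (𝓝 L.det) :=
    ((continuous_id.matrix_det).tendsto L).comp hconv
  have hentry : ∀ i j, Tendsto (fun n => (α n)⁻¹ * rvS S Φ (n + 1) i j) atTop (𝓝 (L i j)) := by
    intro i j
    exact (tendsto_pi_nhds.1 (tendsto_pi_nhds.1 hconv i) j)
  have hlogα : Tendsto (fun n => Real.log (α n)) atTop atTop := Real.tendsto_log_atTop.comp hαtop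
  have hdeteq : ∀ n, Real.log (rvS S Φ (n + 1)).det
      = d * Real.log (α n) + Real.log ((α n)⁻¹ • rvS S Φ (n + 1)).det := by
    intro n
    rw [Matrix.det_smul, Fintype.card_fin, Real.log_mul (by have := hαpos n; positivity)
      (hp _).det_pos.ne', Real.log_pow, Real.log_inv]
    ring
  have hlogdet : Tendsto (fun n => Real.log ((α n)⁻¹ • rvS S Φ (n + 1)).det) atTop
      (𝓝 (Real.log L.det)) := hdet.log hL.det_pos.ne'
  have hd' : (0 : ℝ) < d := by exact_mod_cast hd
  have hTt : Tendsto T atTop atTop := by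
    simp only [hT, hdeteq]
    apply tendsto_atTop_add_const_left
    apply tendsto_atTop_add_const_right
    exact (hlogα.const_mul_atTop hd').atTop_add hlogdet
  have hbdd : ∀ (g : ℕ → ℝ) (l : ℝ), Tendsto g atTop (𝓝 l) → ∀ W : ℕ → ℝ,
      Tendsto W atTop atTop → g =o[atTop] W := fun g l hg W hW =>
    (hg.isBigO_one ℝ).trans_isLittleO (rv_const_littleO W hW 1)
  have hαT : (fun n => Real.log (α n)) =O[atTop] T := by
    have h1 : (fun n => (d : ℝ)⁻¹ * (T n - 1 + Real.log (rvS S Φ 0).det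
        - Real.log ((α n)⁻¹ • rvS S Φ (n + 1)).det)) =O[atTop] T :=
      ((((Asymptotics.isBigO_refl T atTop).sub (rv_const_littleO T hTt 1).isBigO).add
        (rv_const_littleO T hTt _).isBigO).sub (hbdd _ _ hlogdet T hTt).isBigO).const_mul_left _
    refine h1.congr_left fun n => ?_
    simp only [hT, hdeteq]
    field_simp
    ring
  have hTi : ∀ i, (fun n => 1 + (Real.log (rvS S Φ (n + 1) i i) - Real.log (rvS S Φ 0 i i)))
      =O[atTop] T := by
    intro i
    have h1 : Tendsto (fun n => Real.log ((α n)⁻¹ * rvS S Φ (n + 1) i i)) atTop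
      (𝓝 (Real.log (L i i))) := (hentry i i).log hL.diag_pos.ne'
    have h2 : (fun n => 1 + (Real.log (α n) + Real.log ((α n)⁻¹ * rvS S Φ (n + 1) i i)
        - Real.log (rvS S Φ 0 i i))) =O[atTop] T :=
      (rv_const_littleO T hTt 1).isBigO.add ((hαT.add (hbdd _ _ h1 T hTt).isBigO).sub
        (rv_const_littleO T hTt _).isBigO)
    refine h2.congr_left fun n => ?_
    rw [Real.log_mul (inv_pos.2 (hαpos n)).ne' (hp _).diag_pos.ne', Real.log_inv]
    ring
  have hsi : ∀ i, (fun n => rvS S Φ (n + 1) i i) =O[atTop] α := by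
    intro i
    have h1 := (Asymptotics.isBigO_refl α atTop).mul ((hentry i i).isBigO_one ℝ)
    simp only [mul_one] at h1
    refine h1.congr_left fun n => ?_
    have := (hαpos n).ne'
    field_simp
  have hMi : ∀ i, (fun n => M (n + 1) i ^ 2) =o[atTop] fun n => α n * T n := fun i =>
    (hM i).trans_isBigO ((hsi i).mul (hTi i))
  have hMij : ∀ i j, (fun n => M (n + 1) i * M (n + 1) j) =o[atTop] fun n => α n * T n := by
    intro i j
    refine Asymptotics.IsBigO.trans_isLittleO ?_ ((hMi i).add (hMi j))
    refine Asymptotics.IsBigO.of_bound 1 (Eventually.of_forall fun n => ?_)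
    have q1 := sq_nonneg (M (n + 1) i)
    have q2 := sq_nonneg (M (n + 1) j)
    rw [Real.norm_of_nonneg (add_nonneg q1 q2), Real.norm_eq_abs, one_mul, abs_le]
    constructor <;> nlinarith [sq_nonneg (M (n + 1) i + M (n + 1) j),
      sq_nonneg (M (n + 1) i - M (n + 1) j)]
  have hinv : ∀ i j, (fun n => (rvS S Φ (n + 1))⁻¹ i j) =O[atTop] fun n => (α n)⁻¹ := by
    intro i j
    have h1 : Tendsto (fun n => ((α n)⁻¹ • rvS S Φ (n + 1))⁻¹ i j) atTop (𝓝 (L⁻¹ i j)) := by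
      have h2 : ∀ A : Matrix (Fin d) (Fin d) ℝ, A⁻¹ i j = A.det⁻¹ * A.adjugate i j := fun A => by
        rw [Matrix.inv_def, Matrix.smul_apply, Ring.inverse_eq_inv', smul_eq_mul]
      simp only [h2]
      refine (hdet.inv₀ hL.det_pos.ne').mul ?_
      have h3 : Tendsto (fun n => ((α n)⁻¹ • rvS S Φ (n + 1)).adjugate) atTop (𝓝 L.adjugate) :=
        ((continuous_id.matrix_adjugate).tendsto L).comp hconv
      exact tendsto_pi_nhds.1 (tendsto_pi_nhds.1 h3 i) j
    have h4 := (Asymptotics.isBigO_refl (fun n => (α n)⁻¹) atTop).mul (h1.isBigO_one ℝ)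
    simp only [mul_one] at h4
    refine h4.congr_left fun n => ?_
    have h5 : (rvS S Φ (n + 1))⁻¹ = (α n)⁻¹ • ((α n)⁻¹ • rvS S Φ (n + 1))⁻¹ := by
      apply Matrix.inv_eq_right_inv
      rw [Matrix.mul_smul, ← Matrix.smul_mul, Matrix.mul_nonsing_inv]
      rw [Matrix.det_smul]
      exact (mul_pos (pow_pos (inv_pos.2 (hαpos n)) _) (hp _).det_pos).ne'.isUnit
    rw [h5, Matrix.smul_apply, smul_eq_mul]
  have hfin : (fun n => ∑ i, ∑ j, (M (n + 1) i * M (n + 1) j) * (rvS S Φ (n + 1))⁻¹ i j)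
      =o[atTop] T := by
    have hij : ∀ i j, (fun n => (M (n + 1) i * M (n + 1) j) * (rvS S Φ (n + 1))⁻¹ i j)
        =o[atTop] T := by
      intro i j
      refine ((hMij i j).mul_isBigO (hinv i j)).congr_right fun n => ?_
      have := (hαpos n).ne'
      field_simp
    have hi : ∀ i, (fun n => ∑ j, (M (n + 1) i * M (n + 1) j) * (rvS S Φ (n + 1))⁻¹ i j)
        =o[atTop] T := fun i => by
      simpa only [Finset.sum_fn] using Asymptotics.IsLittleO.sum (s := Finset.univ) fun j _ => hij i j
    simpa only [Finset.sum_fn] using Asymptotics.IsLittleO.sum (s := Finset.univ) fun i _ => hi i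
  refine hfin.congr_left fun n => ?_
  simp only [dotProduct, Matrix.mulVec, Finset.mul_sum]
  refine Finset.sum_congr rfl fun i _ => Finset.sum_congr rfl fun j _ => ?_
  ring

lemma rv_det_top {d : ℕ} (hd : 0 < d) (S L : Matrix (Fin d) (Fin d) ℝ)
    (hL : L.PosDef) (Φ : ℕ → Fin d → ℝ) (α : ℕ → ℝ) (hαpos : ∀ n, 0 < α n)
    (hαtop : Tendsto α atTop atTop)
    (hconv : Tendsto (fun n => (α n)⁻¹ • rvS S Φ (n + 1)) atTop (𝓝 L)) :
    Tendsto (fun n => (rvS S Φ n).det) atTop atTop := by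
  rw [← tendsto_add_atTop_iff_nat 1]
  have hdet : Tendsto (fun n => ((α n)⁻¹ • rvS S Φ (n + 1)).det) atTop (𝓝 L.det) :=
    ((continuous_id.matrix_det).tendsto L).comp hconv
  have h1 := ((tendsto_pow_atTop hd.ne').comp hαtop).atTop_mul_pos hL.det_pos hdet
  refine h1.congr fun n => ?_
  have := (hαpos n).ne'
  simp only [Function.comp, Matrix.det_smul, Fintype.card_fin]
  rw [← mul_assoc, ← mul_pow, mul_inv_cancel₀ this, one_pow, one_mul]

lemma rv_diag_top {d : ℕ} (S L : Matrix (Fin d) (Fin d) ℝ)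
    (hL : L.PosDef) (Φ : ℕ → Fin d → ℝ) (α : ℕ → ℝ) (hαpos : ∀ n, 0 < α n)
    (hαtop : Tendsto α atTop atTop)
    (hconv : Tendsto (fun n => (α n)⁻¹ • rvS S Φ (n + 1)) atTop (𝓝 L)) (i : Fin d) :
    Tendsto (fun n => rvS S Φ n i i) atTop atTop := by
  rw [← tendsto_add_atTop_iff_nat 1]
  have hentry : Tendsto (fun n => (α n)⁻¹ * rvS S Φ (n + 1) i i) atTop (𝓝 (L i i)) :=
    tendsto_pi_nhds.1 (tendsto_pi_nhds.1 hconv i) i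
  refine (hαtop.atTop_mul_pos hL.diag_pos hentry).congr fun n => ?_
  rw [← mul_assoc, mul_inv_cancel₀ (hαpos n).ne', one_mul]

lemma rv_final_det (f dd T Q : ℕ → ℝ) (σ2 : ℝ) (hd : ∀ n, 0 < dd n)
    (hf : ∀ n, f n = 1 - dd n / dd (n + 1)) (hft : Tendsto f atTop (𝓝 0))
    (hT : ∀ n, T n = 1 + (Real.log (dd (n + 1)) - Real.log (dd 0)))
    (hdt : Tendsto dd atTop atTop)
    (hQ : (fun n => Q n - σ2 * T n) =o[atTop] T) :
    Tendsto (fun n => Q n / Real.log (dd (n + 2))) atTop (𝓝 σ2) := by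
  have hlog : Tendsto (fun n => Real.log (dd (n + 1))) atTop atTop :=
    Real.tendsto_log_atTop.comp ((tendsto_add_atTop_iff_nat 1).2 hdt)
  have hTt : Tendsto T atTop atTop := by
    have h : T = fun n => 1 + (Real.log (dd (n + 1)) - Real.log (dd 0)) := funext hT
    rw [h]
    exact tendsto_atTop_add_const_left _ _ (tendsto_atTop_add_const_right _ _ hlog)
  have hT0 : ∀ᶠ n in atTop, 0 < T n := hTt.eventually_gt_atTop 0
  have h1 : Tendsto (fun n => Q n / T n) atTop (𝓝 σ2) := by
    have h := hQ.tendsto_div_nhds_zero.add_const σ2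
    rw [zero_add] at h
    refine h.congr' ?_
    filter_upwards [hT0] with n hn
    field_simp
    ring
  have hinc : Tendsto (fun n => -Real.log (1 - f (n + 1))) atTop (𝓝 0) := by
    have h2 : Tendsto (fun n => 1 - f (n + 1)) atTop (𝓝 (1 - 0)) :=
      ((tendsto_add_atTop_iff_nat 1).2 hft).const_sub 1
    rw [sub_zero] at h2
    have h3 := (h2.log one_ne_zero).neg
    rwa [Real.log_one, neg_zero] at h3
  have hlogeq : ∀ n, Real.log (dd (n + 2))
      = T n + (-1 + Real.log (dd 0) + -Real.log (1 - f (n + 1))) := by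
    intro n
    have h3 : 1 - f (n + 1) = dd (n + 1) / dd (n + 2) := by rw [hf]; ring
    rw [h3, Real.log_div (hd _).ne' (hd _).ne', hT]
    ring
  have h2 : Tendsto (fun n => Real.log (dd (n + 2)) / T n) atTop (𝓝 1) := by
    have h4 := ((tendsto_const_nhds (x := -1 + Real.log (dd 0))).add hinc).div_atTop hTt
    have h5 := h4.const_add 1
    rw [add_zero] at h5
    refine h5.congr' ?_
    filter_upwards [hT0] with n hn
    rw [hlogeq]
    field_simp
  have h6 := h1.div h2 one_ne_zero
  rw [div_one] at h6
  refine h6.congr' ?_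
  filter_upwards [hT0] with n hn
  simp only [Pi.div_apply]
  rw [div_div_div_cancel_right₀ hn.ne']

/-- For the stochastic regression model `X_{n+1} = θᵗΦ_n + ε_{n+1}`, the residual variance
estimator satisfies `(n / log d_n)(Γ_n - Δ_n) → σ²` a.s. -/
theorem residual_variance_estimation
    {Ω : Type*} {m0 : MeasurableSpace Ω} {μ : Measure Ω} [IsProbabilityMeasure μ]
    (F : Filtration ℕ m0) {d : ℕ} (hd : 0 < d)
    (ε : ℕ → Ω → ℝ) (Φ : ℕ → Ω → Fin d → ℝ) (X : ℕ → Ω → ℝ) (θ : Fin d → ℝ)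
    (S L : Matrix (Fin d) (Fin d) ℝ) (hS : S.PosDef) (hL : L.PosDef)
    (σ : ℝ) (a : ℝ) (ha : 2 < a)
    (α : ℕ → Ω → ℝ)
    (hmodel : ∀ n ω, X (n + 1) ω = θ ⬝ᵥ Φ n ω + ε (n + 1) ω)
    (hεadapt : ∀ n, StronglyMeasurable[F n] (ε n))
    (hεint : ∀ n, Integrable (ε n) μ)
    (hΦadapt : ∀ n, StronglyMeasurable[F n] (Φ n))
    (hXadapt : ∀ n, StronglyMeasurable[F n] (X n))
    (hmds : ∀ n, μ[ε (n + 1)|F n] =ᵐ[μ] 0)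
    (hvar : ∀ n, μ[fun ω => ε (n + 1) ω ^ 2|F n] =ᵐ[μ] fun _ => σ ^ 2)
    (hmomint : ∀ n, Integrable (fun ω => |ε (n + 1) ω| ^ a) μ)
    (hmom : ∀ᵐ ω ∂μ, ∃ C : ℝ, ∀ n, (μ[fun ω => |ε (n + 1) ω| ^ a|F n]) ω ≤ C)
    (hf0 : ∀ᵐ ω ∂μ, Tendsto (fun n => expl S Φ n ω) atTop (𝓝 0))
    (hαmeas : ∀ n, Measurable (α n))
    (hαpos : ∀ n ω, 0 < α n ω)
    (hαmono : ∀ᵐ ω ∂μ, Monotone fun n => α n ω)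
    (hαtop : ∀ᵐ ω ∂μ, Tendsto (fun n => α n ω) atTop atTop)
    (hconv : ∀ᵐ ω ∂μ, Tendsto (fun n => (α n ω)⁻¹ • Smat S Φ n ω) atTop (𝓝 L)) :
    let Γ : ℕ → Ω → ℝ := fun n ω =>
      (n : ℝ)⁻¹ * ∑ k ∈ Finset.range n, (X (k + 1) ω - lsq S Φ X k ω ⬝ᵥ Φ k ω) ^ 2
    let Δ : ℕ → Ω → ℝ := fun n ω => (n : ℝ)⁻¹ * ∑ k ∈ Finset.Icc 1 n, ε k ω ^ 2
    ∀ᵐ ω ∂μ, Tendsto (fun n : ℕ =>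
      (n : ℝ) / Real.log ((Smat S Φ n ω).det) * (Γ n ω - Δ n ω))
      atTop (𝓝 (σ ^ 2)) := by
  intro Γ Δ
  have hem : ∀ n, StronglyMeasurable[F (n + 1)] (ε (n + 1)) := fun n => hεadapt (n + 1)
  have hei : ∀ n, Integrable (ε (n + 1)) μ := fun n => hεint (n + 1)
  set Sn : ℕ → Ω → Matrix (Fin d) (Fin d) ℝ := fun n ω => rvS S (fun k => Φ k ω) n with hSn
  set Mv : ℕ → Ω → Fin d → ℝ := fun n ω =>
    rvM S θ (fun k => Φ k ω) (fun k => ε (k + 1) ω) n with hMv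
  set f : ℕ → Ω → ℝ := fun n ω => Φ n ω ⬝ᵥ ((Sn (n + 1) ω)⁻¹ *ᵥ Φ n ω) with hfdef
  set π : ℕ → Ω → ℝ := fun n ω => Φ n ω ⬝ᵥ ((Sn n ω)⁻¹ *ᵥ Mv n ω) with hπ
  set T : ℕ → Ω → ℝ := fun n ω =>
    1 + (Real.log (Sn (n + 1) ω).det - Real.log (Sn 0 ω).det) with hT
  set U : ℕ → Ω → ℝ := fun n ω => T n ω + ∑ k ∈ Finset.range (n + 1), π k ω ^ 2 with hU
  have hpd : ∀ n ω, (Sn n ω).PosDef := fun n ω => rvS_posDef S hS _ n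
  have hdd : ∀ n ω, 0 < (Sn n ω).det := fun n ω => (hpd n ω).det_pos
  have hSs : ∀ n ω, Sn (n + 1) ω = Sn n ω + vecMulVec (Φ n ω) (Φ n ω) := fun n ω =>
    rvS_succ S _ n
  have hMs : ∀ n ω, Mv (n + 1) ω = Mv n ω + ε (n + 1) ω • Φ n ω := fun n ω =>
    rvM_succ S θ _ _ n
  have hfd : ∀ n ω, f n ω = 1 - (Sn n ω).det / (Sn (n + 1) ω).det := fun n ω =>
    rv_det _ _ _ (hpd (n + 1) ω) (hSs n ω)
  have hfnn : ∀ n ω, 0 ≤ f n ω := by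
    intro n ω
    have := (hpd (n + 1) ω).inv.posSemidef.dotProduct_mulVec_nonneg (Φ n ω)
    rwa [star_trivial] at this
  have hf1 : ∀ n ω, f n ω ≤ 1 := by
    intro n ω
    rw [hfd]
    have := div_pos (hdd n ω) (hdd (n + 1) ω)
    linarith
  have hflog : ∀ n ω, f n ω ≤ Real.log (Sn (n + 1) ω).det - Real.log (Sn n ω).det := by
    intro n ω
    have h1 := Real.log_le_sub_one_of_pos (div_pos (hdd n ω) (hdd (n + 1) ω))
    rw [Real.log_div (hdd n ω).ne' (hdd (n + 1) ω).ne'] at h1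
    rw [hfd]
    linarith
  have hTs : ∀ n ω, T (n + 1) ω = T n ω
      + (Real.log (Sn (n + 2) ω).det - Real.log (Sn (n + 1) ω).det) := by
    intro n ω
    simp only [hT]
    ring
  have hT1 : ∀ n ω, 1 ≤ T n ω := by
    intro n ω
    induction n with
    | zero =>
      have h1 := hflog 0 ω
      have h2 := hfnn 0 ω
      simp only [hT]
      linarith
    | succ n ih =>
      have h1 := hflog (n + 1) ω
      have h2 := hfnn (n + 1) ω
      rw [hTs]
      linarith
  have hU1 : ∀ n ω, 1 ≤ U n ω := fun n ω =>
    (hT1 n ω).trans (le_add_of_nonneg_right (Finset.sum_nonneg fun k _ => sq_nonneg _))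
  have hUs : ∀ n ω, U (n + 1) ω - U n ω
      = (Real.log (Sn (n + 2) ω).det - Real.log (Sn (n + 1) ω).det) + π (n + 1) ω ^ 2 := by
    intro n ω
    simp only [hU]
    rw [Finset.sum_range_succ _ (n + 1), hTs]
    ring
  -- measurability
  have hΦm : ∀ k n, k ≤ n → ∀ i, Measurable[F n] fun ω => Φ k ω i := by
    intro k n hkn i
    exact (measurable_pi_apply i).comp ((hΦadapt k).measurable.mono (F.mono hkn) le_rfl)
  have hεm : ∀ k n, k ≤ n → Measurable[F n] (ε k) := fun k n hkn =>
    (hεadapt k).measurable.mono (F.mono hkn) le_rfl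
  have hSm : ∀ n m, m ≤ n + 1 → ∀ i j, Measurable[F n] fun ω => Sn m ω i j := by
    intro n m
    induction m with
    | zero =>
      intro _ i j
      simp only [hSn, rvS, Finset.range_zero, Finset.sum_empty, add_zero]
      exact measurable_const
    | succ m ih =>
      intro hm i j
      have h := (ih (by omega) i j).add ((hΦm m n (by omega) i).mul (hΦm m n (by omega) j))
      have heq : (fun ω => Sn (m + 1) ω i j)
          = (fun ω => Sn m ω i j) + ((fun ω => Φ m ω i) * fun ω => Φ m ω j) := by
        funext ω
        rw [hSs]
        rfl
      rw [heq]
      exact h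
  have hMm : ∀ n m, m ≤ n → ∀ i, Measurable[F n] fun ω => Mv m ω i := by
    intro n m
    induction m with
    | zero =>
      intro _ i
      simp only [hMv, rvM, Finset.range_zero, Finset.sum_empty, add_zero]
      exact measurable_const
    | succ m ih =>
      intro hm i
      have h := (ih (by omega) i).add ((hεm (m + 1) n hm).mul (hΦm m n (by omega) i))
      have heq : (fun ω => Mv (m + 1) ω i)
          = (fun ω => Mv m ω i) + (ε (m + 1) * fun ω => Φ m ω i) := by
        funext ω
        rw [hMs]
        rfl
      rw [heq]
      exact h
  have hfm : ∀ n, Measurable[F n] (f n) := by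
    intro n
    simp only [hfdef, dotProduct, Matrix.mulVec]
    refine Finset.measurable_fun_sum _ fun i _ => (hΦm n n le_rfl i).mul ?_
    refine Finset.measurable_fun_sum _ fun j _ => Measurable.mul ?_ (hΦm n n le_rfl j)
    exact rv_meas_inv (m := F n) _ (hSm n (n + 1) le_rfl) i j
  have hπm' : ∀ n m, m ≤ n → Measurable[F n] (π m) := by
    intro n m hm
    simp only [hπ, dotProduct, Matrix.mulVec]
    refine Finset.measurable_fun_sum _ fun i _ => (hΦm m n hm i).mul ?_
    refine Finset.measurable_fun_sum _ fun j _ => Measurable.mul ?_ (hMm n m hm j)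
    exact rv_meas_inv (m := F n) _ (hSm n m (by omega)) i j
  have hπm : ∀ n, Measurable[F n] (π n) := fun n => hπm' n n le_rfl
  have hTm : ∀ n, Measurable[F n] (T n) := by
    intro n
    have h1 := (rv_meas_det (m := F n) _ (hSm n (n + 1) le_rfl)).log
    have h2 := (rv_meas_det (m := F n) _ (hSm n 0 (by omega))).log
    exact (h1.sub h2).const_add 1
  have hUm : ∀ n, Measurable[F n] (U n) := by
    intro n
    refine (hTm n).add (Finset.measurable_fun_sum _ fun k hk => ?_)
    exact (hπm' n k (by rw [Finset.mem_range] at hk; omega)).pow_const 2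
  -- noise terms
  have hn1 := rv_noise1 F (fun n => ε (n + 1)) σ a ha hem hei hmds hvar hmomint π U hπm hUm hU1
    (fun n ω => by
      rw [hUs]
      have h1 := hflog (n + 1) ω
      have h2 := hfnn (n + 1) ω
      linarith)
  have hn2 := rv_noise1 F (fun n => ε (n + 1)) σ a ha hem hei hmds hvar hmomint
    (fun n ω => (1 - f n ω) * π n ω) U (fun n => ((hfm n).const_sub 1).mul (hπm n)) hUm hU1
    (fun n ω => by
      rw [hUs]
      have h1 := hflog (n + 1) ω
      have h2 := hfnn (n + 1) ω
      have h3 := hf1 (n + 1) ω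
      have h4 : (1 - f (n + 1) ω) ^ 2 ≤ 1 := by nlinarith
      have h5 := mul_le_mul_of_nonneg_right h4 (sq_nonneg (π (n + 1) ω))
      rw [mul_pow]
      linarith)
  have hn3 := rv_noise2 F (fun n => ε (n + 1)) σ a ha hem hei hvar hmomint hmom f U hfm hUm hU1
    hfnn hf1
    (fun n ω => by
      rw [hUs]
      have h1 := hflog (n + 1) ω
      have h2 := sq_nonneg (π (n + 1) ω)
      linarith)
  have hsc : ∀ i, ∀ᵐ ω ∂μ, (fun n => Mv (n + 1) ω i ^ 2) =o[atTop]
      fun n => Sn (n + 1) ω i i * (1 + (Real.log (Sn (n + 1) ω i i) - Real.log (Sn 0 ω i i))) := by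
    intro i
    refine rv_scalar F (fun n => ε (n + 1)) σ a ha hem hei hmds hvar hmomint hmom
      (fun n ω => Φ n ω i) (fun n ω => Sn n ω i i) (fun n ω => Mv n ω i)
      (fun n => hΦm n n le_rfl i) (fun n => hSm n (n + 1) le_rfl i i) (fun n => hMm n n le_rfl i)
      (S i i) hS.diag_pos ?_ ?_ ?_ ?_
    · intro ω
      simp [hSn, rvS]
    · intro n ω
      simp only [hSs, Matrix.add_apply, vecMulVec_apply]
      ring
    · intro n ω
      simp only [hMs, Pi.add_apply, Pi.smul_apply, smul_eq_mul]
      ring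
    · filter_upwards [hαtop, hconv] with ω h1 h2
      exact rv_diag_top S L hL _ (fun n => α n ω) (fun n => hαpos n ω) h1 h2 i
  filter_upwards [hn1, hn2, hn3, ae_all_iff.2 hsc, hf0, hαtop, hconv] with ω g1 g2 g3 g4 g5 g6 g7
  have hVo := rv_V_littleO hd S L hS hL (fun k => Φ k ω) (fun n => Mv n ω) (fun n => α n ω)
    (fun n => hαpos n ω) g6 g7 g4
  have hdt : Tendsto (fun n => (Sn n ω).det) atTop atTop :=
    rv_det_top hd S L hL (fun k => Φ k ω) (fun n => α n ω) (fun n => hαpos n ω) g6 g7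
  have hft : Tendsto (fun n => f n ω) atTop (𝓝 0) := g5
  have hmain := rv_main_det (fun n => f n ω) (fun n => π n ω) (fun n => ε (n + 1) ω)
    (fun n => Mv n ω ⬝ᵥ ((Sn n ω)⁻¹ *ᵥ Mv n ω)) (fun n => (Sn n ω).det) (fun n => T n ω)
    (fun n => U n ω) (σ ^ 2) (fun n => hdd n ω) (fun n => hfd n ω) (fun n => hfnn n ω) hft
    (fun n => by
      have := rv_riccati (Sn n ω) (Sn (n + 1) ω) (Φ n ω) (Mv n ω) (ε (n + 1) ω) (hpd n ω)
        (hpd (n + 1) ω) (hSs n ω)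
      rw [← hMs] at this
      exact this)
    (fun n => rfl) (fun n => rfl) hdt hVo g1 g2 g3
  have hfin := rv_final_det (fun n => f n ω) (fun n => (Sn n ω).det) (fun n => T n ω)
    (fun n => ∑ k ∈ Finset.range (n + 1), (π k ω ^ 2 - 2 * (π k ω * ε (k + 1) ω))) (σ ^ 2)
    (fun n => hdd n ω) (fun n => hfd n ω) hft (fun n => rfl) hdt hmain
  rw [← tendsto_add_atTop_iff_nat 1]
  refine hfin.congr fun n => ?_
  have hsum : ∀ N, ∑ k ∈ Finset.range N, (X (k + 1) ω - lsq S Φ X k ω ⬝ᵥ Φ k ω) ^ 2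
      - ∑ k ∈ Finset.Icc 1 N, ε k ω ^ 2
      = ∑ k ∈ Finset.range N, (π k ω ^ 2 - 2 * (π k ω * ε (k + 1) ω)) := by
    intro N
    induction N with
    | zero => simp
    | succ N ih =>
      rw [Finset.sum_range_succ, Finset.sum_range_succ, ← ih,
        Finset.sum_Icc_succ_top (by omega), hmodel, rv_lsq S hS Φ X ε θ hmodel N ω,
        add_dotProduct]
      have hπN : ((rvS S (fun k => Φ k ω) N)⁻¹ *ᵥ
          rvM S θ (fun k => Φ k ω) (fun k => ε (k + 1) ω) N) ⬝ᵥ Φ N ω = π N ω :=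
        dotProduct_comm _ _
      rw [hπN]
      ring
  have hSeq : Smat S Φ (n + 1) ω = Sn (n + 2) ω := rfl
  have hn0 : ((n + 1 : ℕ) : ℝ) ≠ 0 := by positivity
  simp only [Γ, Δ]
  rw [← mul_sub, hsum, hSeq]
  field_simp
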